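/- Assume the curve setup with counterclockwise orientation and let a well-* distributed mesh with parameters κ ≥ 2 and M > 0 be given; define the N×N matrix A_N by A_N(i,j) = ((l(s̃_i^N) − l(s_j^N))·n(s̃_i^N))/‖l(s̃_i^N) − l(s_j^N)‖² when l(s̃_i^N) ≠ l(s_j^N), and A_N(i,j) = −(1/2)·l''(s̃_i^N)·n(s̃_i^N) when l(s̃_i^N) = l(s_j^N). Then: (i) there exist δ > 0 and integers N*, k* ≥ 1 such that for all N ≥ N*, all k ≥ k* and all z ∈ ℝ^N, ‖((L/N)·A_N − π·I)^k z‖_{ℓ²} ≤ (2π − δ)^k·‖z‖_{ℓ²}; and (ii) there exist C > 0 and N₀ such that for every N ≥ N₀ and every v ∈ ℝ^N there is a unique z ∈ ℝ^N with (L/N)·A_N z + π·z = v, and this solution satisfies ‖z‖_{ℓ²} ≤ C·‖v‖_{ℓ²}. -/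

import Mathlib

open Real MeasureTheory

/-- Dot product of two points of the plane `ℝ² ≃ ℂ`. -/
noncomputable def dotR (z w : ℂ) : ℝ := z.re * w.re + z.im * w.im

/-- The unit normal vector `n(s) = (l₂'(s), -l₁'(s))` of a curve `l`. -/
noncomputable def normalv (l : ℝ → ℂ) (s : ℝ) : ℂ := -Complex.I * deriv l s

open Classical in
/-- The discretized double layer matrix, with the continuous extension
`-(1/2)·l''·n` of the kernel on the diagonal. -/
noncomputable def AmatE (l : ℝ → ℂ) {N : ℕ} (a b : Fin N → ℝ) : Matrix (Fin N) (Fin N) ℝ :=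
  Matrix.of fun i j =>
    if l (a i) = l (b j) then -(1/2) * dotR (deriv (deriv l) (a i)) (normalv l (a i))
    else dotR (l (a i) - l (b j)) (normalv l (a i)) / ‖l (a i) - l (b j)‖ ^ 2

/-- The normalized `ℓ²` norm of a vector. -/
noncomputable def l2norm {N : ℕ} (z : Fin N → ℝ) : ℝ := Real.sqrt ((N : ℝ)⁻¹ * ∑ i, z i ^ 2)



namespace FC
open scoped ContDiff Topology

theorem hasFDerivAt_param {E G : Type} [NormedAddCommGroup E] [NormedSpace ℝ E] [ProperSpace E]
    [NormedAddCommGroup G] [NormedSpace ℝ G] (F : E → ℝ → G)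
    (hF : ContDiff ℝ 1 (fun p : E × ℝ => F p.1 p.2)) (a b : ℝ) (x : E) :
    HasFDerivAt (fun x => ∫ t in a..b, F x t)
      (∫ t in a..b, fderiv ℝ (fun x => F x t) x) x := by
  have hc' : Continuous (fun p : E × ℝ => fderiv ℝ (fun x => F x p.2) p.1) := by
    have : ContDiff ℝ 0 (fun p : E × ℝ => fderiv ℝ (fun x => F x p.2) p.1) := by
      apply ContDiff.fderiv (m := 1) (n := 0) (f := fun (p : E × ℝ) (x : E) => F x p.2) (g := fun p => p.1)
      · exact hF.comp (by fun_prop : ContDiff ℝ 1 fun q : (E × ℝ) × E => (q.2, q.1.2))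
      · fun_prop
      · simp
    exact this.continuous
  obtain ⟨C, hC⟩ := ((isCompact_closedBall x 1).prod (isCompact_uIcc (a := a) (b := b))).exists_bound_of_continuousOn
    hc'.continuousOn
  refine intervalIntegral.hasFDerivAt_integral_of_dominated_of_fderiv_le (s := Metric.closedBall x 1)
    (bound := fun _ => C) (F := F) (F' := fun y t => fderiv ℝ (fun x => F x t) y)
    (Metric.closedBall_mem_nhds x one_pos) ?_ ?_ ?_ ?_ ?_ ?_
  · refine Filter.Eventually.of_forall fun y => ?_
    exact (hF.continuous.comp (by fun_prop : Continuous fun t : ℝ => (y, t))).aestronglyMeasurable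
  · exact (hF.continuous.comp (by fun_prop : Continuous fun t : ℝ => (x, t))).intervalIntegrable _ _
  · exact (hc'.comp (by fun_prop : Continuous fun t : ℝ => (x, t))).aestronglyMeasurable
  · refine Filter.Eventually.of_forall fun t ht y hy => ?_
    exact hC (y, t) ⟨hy, Set.uIoc_subset_uIcc ht⟩
  · exact intervalIntegrable_const
  · refine Filter.Eventually.of_forall fun t ht y hy => ?_
    have : DifferentiableAt ℝ (fun x => F x t) y :=
      (hF.comp (by fun_prop : ContDiff ℝ 1 fun x : E => (x, t))).differentiable one_ne_zero y
    exact this.hasFDerivAt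

theorem contDiff_param_nat {E : Type} [NormedAddCommGroup E] [NormedSpace ℝ E] [ProperSpace E]
    (a b : ℝ) (n : ℕ) : ∀ {G : Type} [NormedAddCommGroup G] [NormedSpace ℝ G] (F : E → ℝ → G)
    (_ : ContDiff ℝ ∞ (fun p : E × ℝ => F p.1 p.2)),
    ContDiff ℝ n (fun x => ∫ t in a..b, F x t) := by
  induction n with
  | zero =>
    intro G _ _ F hF
    have : Continuous (fun x => ∫ t in a..b, F x t) := by
      apply continuous_iff_continuousAt.2
      intro x
      exact (hasFDerivAt_param F (hF.of_le (by exact_mod_cast le_top)) a b x).continuousAt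
    simpa using (contDiff_zero (𝕜 := ℝ)).2 this
  | succ n ih =>
    intro G _ _ F hF
    have := contDiff_succ_iff_hasFDerivAt (𝕜 := ℝ) (n := n) (f := fun x => ∫ t in a..b, F x t)
    push_cast
    rw [this]
    refine ⟨fun x => ∫ t in a..b, fderiv ℝ (fun x => F x t) x, ?_, fun x =>
      hasFDerivAt_param F (hF.of_le (by exact_mod_cast le_top)) a b x⟩
    apply ih (fun x t => fderiv ℝ (fun x => F x t) x)
    apply ContDiff.fderiv (n := ∞) (f := fun (p : E × ℝ) (x : E) => F x p.2) (g := fun p => p.1)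
    · exact hF.comp (by fun_prop : ContDiff ℝ ∞ fun q : (E × ℝ) × E => (q.2, q.1.2))
    · fun_prop
    · simp

theorem contDiff_param {E : Type} [NormedAddCommGroup E] [NormedSpace ℝ E] [ProperSpace E]
    {G : Type} [NormedAddCommGroup G] [NormedSpace ℝ G]
    (a b : ℝ) (F : E → ℝ → G) (hF : ContDiff ℝ ∞ (fun p : E × ℝ => F p.1 p.2)) :
    ContDiff ℝ ∞ (fun x => ∫ t in a..b, F x t) :=
  contDiff_infty.2 fun n => contDiff_param_nat a b n F hF

/-- derivative in second variable -/
theorem contDiff_deriv2 {G : Type} [NormedAddCommGroup G] [NormedSpace ℝ G]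
    {F : ℝ → ℝ → G} (hF : ContDiff ℝ ∞ (fun p : ℝ × ℝ => F p.1 p.2)) :
    ContDiff ℝ ∞ (fun p : ℝ × ℝ => deriv (fun t => F p.1 t) p.2) := by
  have : ContDiff ℝ ∞ (fun p : ℝ × ℝ => fderiv ℝ (fun t => F p.1 t) p.2 1) := by
    apply ContDiff.fderiv_apply (n := ∞) (f := fun (p : ℝ × ℝ) (t : ℝ) => F p.1 t) (g := fun p => p.2)
    · exact hF.comp (by fun_prop : ContDiff ℝ ∞ fun q : (ℝ × ℝ) × ℝ => (q.1.1, q.2))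
    · fun_prop
    · fun_prop
    · simp
  simpa using this

theorem contDiff_swap {G : Type} [NormedAddCommGroup G] [NormedSpace ℝ G]
    {F : ℝ → ℝ → G} (hF : ContDiff ℝ ∞ (fun p : ℝ × ℝ => F p.1 p.2)) :
    ContDiff ℝ ∞ (fun p : ℝ × ℝ => F p.2 p.1) :=
  hF.comp (by fun_prop : ContDiff ℝ ∞ fun q : ℝ × ℝ => (q.2, q.1))

theorem contDiff_deriv1 {G : Type} [NormedAddCommGroup G] [NormedSpace ℝ G]
    {F : ℝ → ℝ → G} (hF : ContDiff ℝ ∞ (fun p : ℝ × ℝ => F p.1 p.2)) :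
    ContDiff ℝ ∞ (fun p : ℝ × ℝ => deriv (fun s => F s p.2) p.1) :=
  contDiff_swap (F := fun t s => deriv (fun s => F s t) s) (contDiff_deriv2 (F := fun t s => F s t) (contDiff_swap hF))

theorem contDiff_left {G : Type} [NormedAddCommGroup G] [NormedSpace ℝ G]
    {F : ℝ → ℝ → G} (hF : ContDiff ℝ ∞ (fun p : ℝ × ℝ => F p.1 p.2)) (t : ℝ) :
    ContDiff ℝ ∞ (fun s => F s t) :=
  hF.comp (by fun_prop : ContDiff ℝ ∞ fun q : ℝ => (q, t))

theorem contDiff_right {G : Type} [NormedAddCommGroup G] [NormedSpace ℝ G]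
    {F : ℝ → ℝ → G} (hF : ContDiff ℝ ∞ (fun p : ℝ × ℝ => F p.1 p.2)) (s : ℝ) :
    ContDiff ℝ ∞ (fun t => F s t) :=
  hF.comp (by fun_prop : ContDiff ℝ ∞ fun q : ℝ => (s, q))

theorem hasDerivAt_param {G : Type} [NormedAddCommGroup G] [NormedSpace ℝ G]
    {F : ℝ → ℝ → G} (hF : ContDiff ℝ ∞ (fun p : ℝ × ℝ => F p.1 p.2)) (a b x : ℝ) :
    HasDerivAt (fun x => ∫ t in a..b, F x t) (∫ t in a..b, deriv (fun x => F x t) x) x := by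
  have h := (hasFDerivAt_param F (hF.of_le (by exact_mod_cast le_top)) a b x).hasDerivAt
  have hc : Continuous (fun t => fderiv ℝ (fun x => F x t) x) := by
    have : ContDiff ℝ ∞ (fun t => fderiv ℝ (fun x => F x t) x) := by
      apply ContDiff.fderiv (n := ∞) (f := fun (t : ℝ) (x : ℝ) => F x t) (g := fun p => x)
      · exact contDiff_swap hF
      · fun_prop
      · simp
    exact this.continuous
  rw [ContinuousLinearMap.intervalIntegral_apply (hc.intervalIntegrable _ _)] at h
  simpa using h

/-- Hadamard quotient. -/
noncomputable def hq (g : ℝ → ℂ) (s t : ℝ) : ℂ := ∫ u in (0:ℝ)..1, deriv g (s + u * (t - s))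

theorem hq_contDiff {g : ℝ → ℂ} (hg : ContDiff ℝ ∞ g) :
    ContDiff ℝ ∞ (fun p : ℝ × ℝ => hq g p.1 p.2) := by
  unfold hq
  apply contDiff_param (E := ℝ × ℝ) 0 1 (fun p u => deriv g (p.1 + u * (p.2 - p.1)))
  have : ContDiff ℝ ∞ (deriv g) := (contDiff_infty_iff_deriv.1 hg).2
  exact this.comp (by fun_prop)

theorem hq_mul {g : ℝ → ℂ} (hg : ContDiff ℝ ∞ g) (s t : ℝ) :
    g t - g s = (t - s : ℝ) * hq g s t := by
  have hd : Differentiable ℝ g := (contDiff_infty_iff_deriv.1 hg).1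
  have hc : Continuous (deriv g) := (contDiff_infty_iff_deriv.1 hg).2.continuous
  have h : ∀ u ∈ Set.uIcc (0:ℝ) 1, HasDerivAt (fun u : ℝ => g (s + u * (t - s)))
      ((t - s : ℝ) • deriv g (s + u * (t - s))) u := by
    intro u _
    have h1 : HasDerivAt (fun u : ℝ => s + u * (t - s)) (t - s) u := by
      simpa using ((hasDerivAt_id u).mul_const (t - s)).const_add s
    exact (hd _).hasDerivAt.scomp u h1
  have := intervalIntegral.integral_eq_sub_of_hasDerivAt h
    ((by fun_prop : Continuous fun u : ℝ => (t - s) • deriv g (s + u * (t - s))).intervalIntegrable _ _)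
  rw [intervalIntegral.integral_smul] at this
  simp only [one_mul, zero_mul, add_zero, add_sub_cancel] at this
  rw [← this, hq]; simp

theorem hq_self (g : ℝ → ℂ) (t : ℝ) : hq g t t = deriv g t := by
  simp [hq]

/-- the curve -/
structure Crv (L : ℝ) (l : ℝ → ℂ) : Prop where
  pos : 0 < L
  sm : ContDiff ℝ ∞ l
  per : ∀ s, l (s + L) = l s
  arc : ∀ s, ‖deriv l s‖ = 1
  inj : Set.InjOn l (Set.Ico 0 L)

/-- smooth periodic functions -/
structure SP (L : ℝ) (f : ℝ → ℂ) : Prop where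
  sm : ContDiff ℝ ∞ f
  per : Function.Periodic f L

variable {L : ℝ} {l : ℝ → ℂ}

theorem Crv.sp (h : Crv L l) : SP L l := ⟨h.sm, h.per⟩

theorem SP.deriv {f : ℝ → ℂ} (h : SP L f) : SP L (deriv f) := by
  refine ⟨(contDiff_infty_iff_deriv.1 h.sm).2, fun x => ?_⟩
  have : (fun y => f (y + L)) = f := funext h.per
  conv_rhs => rw [← this]
  rw [deriv_comp_add_const]

theorem SP.diff {f : ℝ → ℂ} (h : SP L f) : Differentiable ℝ f := (contDiff_infty_iff_deriv.1 h.sm).1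

theorem SP.cont {f : ℝ → ℂ} (h : SP L f) : Continuous f := h.sm.continuous

theorem SP.conj {f : ℝ → ℂ} (h : SP L f) : SP L (fun t => (starRingEnd ℂ) (f t)) :=
  ⟨Complex.conjCLE.contDiff.comp h.sm, fun x => by simp [h.per x]⟩

theorem deriv_conj {f : ℝ → ℂ} (h : Differentiable ℝ f) (t : ℝ) :
    deriv (fun t => (starRingEnd ℂ) (f t)) t = (starRingEnd ℂ) (deriv f t) := by
  have := (Complex.conjCLE.toContinuousLinearMap.hasFDerivAt (x := f t)).comp_hasDerivAt t (h t).hasDerivAt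
  exact this.deriv

theorem Crv.ne (h : Crv L l) (s : ℝ) : deriv l s ≠ 0 := by
  intro h0; have := h.arc s; simp [h0] at this

theorem Crv.eq_iff (h : Crv L l) (s t : ℝ) : l t = l s ↔ ∃ m : ℤ, t = s + m * L := by
  have hp : Function.Periodic l L := h.per
  constructor
  · intro hts
    obtain ⟨a, ha, hta⟩ := hp.exists_mem_Ico₀ h.pos t
    obtain ⟨b, hb, hsb⟩ := hp.exists_mem_Ico₀ h.pos s
    have h1 := toIcoMod_mem_Ico' h.pos t
    have h2 := toIcoMod_mem_Ico' h.pos s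
    have e1 : l (toIcoMod h.pos 0 t) = l t := by
      rw [toIcoMod]; exact hp.sub_zsmul_eq _
    have e2 : l (toIcoMod h.pos 0 s) = l s := by
      rw [toIcoMod]; exact hp.sub_zsmul_eq _
    have e3 := h.inj h1 h2 (by rw [e1, e2, hts])
    rw [toIcoMod, toIcoMod] at e3
    refine ⟨toIcoDiv h.pos 0 t - toIcoDiv h.pos 0 s, ?_⟩
    push_cast
    simp only [zsmul_eq_mul] at e3
    linarith
  · rintro ⟨m, rfl⟩
    exact hp.int_mul m s

open Classical in
/-- divided difference -/
noncomputable def Phi (l g : ℝ → ℂ) (s t : ℝ) : ℂ :=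
  if l t = l s then deriv g t / deriv l t else (g t - g s) / (l t - l s)

theorem Phi_contDiff (h : Crv L l) {g : ℝ → ℂ} (hg : SP L g) :
    ContDiff ℝ ∞ (fun p : ℝ × ℝ => Phi l g p.1 p.2) := by
  rw [contDiff_iff_contDiffAt]
  rintro ⟨s, t⟩
  have hlc := h.sm.continuous
  by_cases he : l t = l s
  · obtain ⟨m, hm⟩ := (h.eq_iff s t).1 he
    have hne : hq l (s + m * L) t ≠ 0 := by rw [← hm, hq_self]; exact h.ne t
    have hcd : ContDiff ℝ ∞ (fun p : ℝ × ℝ => hq l (p.1 + m * L) p.2) :=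
      (hq_contDiff h.sm).comp (by fun_prop : ContDiff ℝ ∞ fun p : ℝ × ℝ => (p.1 + m * L, p.2))
    have hcg : ContDiff ℝ ∞ (fun p : ℝ × ℝ => hq g (p.1 + m * L) p.2) :=
      (hq_contDiff hg.sm).comp (by fun_prop : ContDiff ℝ ∞ fun p : ℝ × ℝ => (p.1 + m * L, p.2))
    have hev : ∀ᶠ p : ℝ × ℝ in 𝓝 (s, t), hq l (p.1 + m * L) p.2 ≠ 0 :=
      hcd.continuous.continuousAt.eventually_ne hne
    have hdv := (hcg.contDiffAt (x := (s, t))).mul (hcd.contDiffAt.inv (by exact hne))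
    refine hdv.congr_of_eventuallyEq ?_
    filter_upwards [hev] with p hp
    rw [Pi.inv_apply, ← div_eq_mul_inv]
    have e1 : l p.1 = l (p.1 + m * L) := (Function.Periodic.int_mul h.per m p.1).symm
    have e2 : g p.1 = g (p.1 + m * L) := (hg.per.int_mul m p.1).symm
    have h1 := hq_mul h.sm (p.1 + m * L) p.2
    have h2 := hq_mul hg.sm (p.1 + m * L) p.2
    simp only [Phi]
    split_ifs with hc
    · rw [e1] at hc
      rw [hc, sub_self] at h1
      have h3 : ((p.2 - (p.1 + m * L) : ℝ) : ℂ) = 0 := by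
        rcases mul_eq_zero.1 h1.symm with h | h
        · exact h
        · exact absurd h hp
      have h4 : p.2 = p.1 + m * L := by
        have := Complex.ofReal_eq_zero.1 h3; linarith
      rw [← h4, hq_self, hq_self]
    · rw [e1, e2, h1, h2]
      apply mul_div_mul_left
      intro h0
      apply hc
      rw [e1]
      have h4 : p.2 = p.1 + m * L := by
        have := Complex.ofReal_eq_zero.1 h0; linarith
      rw [← h4]
  · have hev : ∀ᶠ p : ℝ × ℝ in 𝓝 (s, t), l p.2 - l p.1 ≠ 0 := by
      apply ContinuousAt.eventually_ne
      · exact (by fun_prop : Continuous fun p : ℝ × ℝ => l p.2 - l p.1).continuousAt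
      · exact sub_ne_zero.2 he
    have c1 : ContDiff ℝ ∞ (fun p : ℝ × ℝ => l p.2 - l p.1) :=
      (h.sm.comp contDiff_snd).sub (h.sm.comp contDiff_fst)
    have c2 : ContDiff ℝ ∞ (fun p : ℝ × ℝ => g p.2 - g p.1) :=
      (hg.sm.comp contDiff_snd).sub (hg.sm.comp contDiff_fst)
    have hdv := (c2.contDiffAt (x := (s, t))).mul (c1.contDiffAt.inv (by exact sub_ne_zero.2 he))
    refine hdv.congr_of_eventuallyEq ?_
    filter_upwards [hev] with p hp
    rw [Pi.inv_apply, ← div_eq_mul_inv]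
    simp only [Phi]
    rw [if_neg (sub_ne_zero.1 hp)]
    
theorem Phi_mul {g : ℝ → ℂ} (h : Crv L l) (hg : SP L g) (s t : ℝ) :
    Phi l g s t * (l t - l s) = g t - g s := by
  unfold Phi
  split_ifs with hc
  · obtain ⟨m, rfl⟩ := (h.eq_iff s t).1 hc
    rw [hc, hg.per.int_mul m s]; simp
  · rw [div_mul_cancel₀]; exact sub_ne_zero.2 hc

theorem Phi_symm {g : ℝ → ℂ} (h : Crv L l) (hg : SP L g) (s t : ℝ) :
    Phi l g s t = Phi l g t s := by
  unfold Phi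
  by_cases hc : l t = l s
  · rw [if_pos hc, if_pos hc.symm]
    obtain ⟨m, rfl⟩ := (h.eq_iff s t).1 hc
    rw [hg.deriv.per.int_mul m s, h.sp.deriv.per.int_mul m s]
  · rw [if_neg hc, if_neg (Ne.symm hc), ← neg_div_neg_eq]; simp

theorem Phi_per_right {g : ℝ → ℂ} (h : Crv L l) (hg : SP L g) (s t : ℝ) :
    Phi l g s (t + L) = Phi l g s t := by
  simp only [Phi, h.per t, hg.per t, hg.deriv.per t, h.sp.deriv.per t]

theorem Phi_sp {g : ℝ → ℂ} (h : Crv L l) (hg : SP L g) (s : ℝ) : SP L (Phi l g s) :=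
  ⟨contDiff_right (Phi_contDiff h hg) s, fun t => Phi_per_right h hg s t⟩

/-- points on the same place are null -/
theorem Crv.ae_ne (h : Crv L l) (s : ℝ) : ∀ᵐ t : ℝ, l t ≠ l s := by
  have : (Set.range fun m : ℤ => s + m * L).Countable := Set.countable_range _
  filter_upwards [this.ae_notMem volume] with t ht hc
  obtain ⟨m, hm⟩ := (h.eq_iff s t).1 hc
  exact ht ⟨m, hm.symm⟩

end FC


namespace FC
open scoped ContDiff Topology
variable {L : ℝ} {l : ℝ → ℂ}

/-- the smooth kernel `∂_t arg (l t - l s)` -/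
noncomputable def Ks (l : ℝ → ℂ) (s t : ℝ) : ℝ :=
  ((Complex.I / 2) * deriv (Phi l (fun x => (starRingEnd ℂ) (l x)) s) t *
    (starRingEnd ℂ) (Phi l (fun x => (starRingEnd ℂ) (l x)) s t)).re

theorem Ks_contDiff (h : Crv L l) : ContDiff ℝ ∞ (fun p : ℝ × ℝ => Ks l p.1 p.2) := by
  have h1 := Phi_contDiff h h.sp.conj
  have h2 := contDiff_deriv2 h1
  have h3 := (Complex.conjCLE.contDiff (n := ∞)).comp h1
  unfold Ks
  exact Complex.reCLM.contDiff.comp ((contDiff_const.mul h2).mul h3)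

theorem Ks_cont (h : Crv L l) : Continuous (fun p : ℝ × ℝ => Ks l p.1 p.2) := (Ks_contDiff h).continuous

theorem Phi_congr_left {g : ℝ → ℂ} {s s' : ℝ} (h1 : l s = l s') (h2 : g s = g s') :
    Phi l g s = Phi l g s' := by
  funext t; simp [Phi, h1, h2]

theorem Ks_congr_left {s s' : ℝ} (h1 : l s = l s') (t : ℝ) : Ks l s t = Ks l s' t := by
  unfold Ks; rw [Phi_congr_left (s' := s') h1 (by simp [h1])]

theorem Ks_per_left (h : Crv L l) (s t : ℝ) : Ks l (s + L) t = Ks l s t :=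
  Ks_congr_left (h.per s) t

theorem Ks_per_right (h : Crv L l) (s t : ℝ) : Ks l s (t + L) = Ks l s t := by
  unfold Ks
  rw [(Phi_sp h h.sp.conj s).deriv.per t, (Phi_sp h h.sp.conj s).per t]

theorem Ks_of_ne (h : Crv L l) {s t : ℝ} (hst : l t ≠ l s) :
    Ks l s t = (deriv l t / (l t - l s)).im := by
  have hlc := h.sm.continuous
  have hw : l t - l s ≠ 0 := sub_ne_zero.2 hst
  have hw' : (starRingEnd ℂ) (l t - l s) ≠ 0 := (map_ne_zero (starRingEnd ℂ)).2 hw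
  have hd : HasDerivAt l (deriv l t) t := (h.sp.diff t).hasDerivAt
  have hd' : HasDerivAt (fun x => (starRingEnd ℂ) (l x)) ((starRingEnd ℂ) (deriv l t)) t := by
    have := (h.sp.conj.diff t).hasDerivAt
    rwa [deriv_conj h.sp.diff] at this
  have hq := (hd'.sub_const ((starRingEnd ℂ) (l s))).div (hd.sub_const (l s)) hw
  have hev : ∀ᶠ x in 𝓝 t, l x ≠ l s := hlc.continuousAt.eventually_ne hst
  have hq2 : HasDerivAt (Phi l (fun x => (starRingEnd ℂ) (l x)) s) _ t :=
    hq.congr_of_eventuallyEq (by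
      filter_upwards [hev] with x hx
      simp [Phi, hx])
  unfold Ks
  rw [hq2.deriv]
  have e : Phi l (fun x => (starRingEnd ℂ) (l x)) s t = (starRingEnd ℂ) (l t - l s) / (l t - l s) := by
    simp [Phi, hst]
  rw [e]
  rw [← map_sub] at *
  set w := l t - l s
  set τ := deriv l t
  have : Complex.I / 2 * (((starRingEnd ℂ) τ * w - (starRingEnd ℂ) w * τ) / w ^ 2) *
      (starRingEnd ℂ) ((starRingEnd ℂ) w / w) = Complex.I / 2 * ((starRingEnd ℂ) (τ / w) - τ / w) := by
    simp only [map_div₀, Complex.conj_conj]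
    field_simp
  rw [this]
  have h2 : ((starRingEnd ℂ) (τ / w) - τ / w) = -(2 * (τ / w).im : ℝ) * Complex.I := by
    generalize τ / w = v
    apply Complex.ext
    · simp
    · simp; ring
  rw [h2]
  have : Complex.I / 2 * (-((2 * (τ / w).im : ℝ) : ℂ) * Complex.I) = (((τ / w).im : ℝ) : ℂ) := by
    push_cast
    linear_combination (-((τ / w).im : ℂ)) * Complex.I_mul_I
  rw [this, Complex.ofReal_re]

theorem Ks_diag (h : Crv L l) {s t : ℝ} (hst : l t = l s) :
    Ks l s t = -(1/2) * dotR (deriv (deriv l) t) (normalv l t) := by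
  rw [Ks_congr_left hst.symm]
  set g : ℝ → ℂ := fun x => (starRingEnd ℂ) (l x) with hg
  have hgs : SP L g := h.sp.conj
  have hPhi := Phi_contDiff h hgs
  have hF : HasFDerivAt (fun p : ℝ × ℝ => Phi l g p.1 p.2) _ (t, t) :=
    (hPhi.differentiable (by simp) (t, t)).hasFDerivAt
  set F' := fderiv ℝ (fun p : ℝ × ℝ => Phi l g p.1 p.2) (t, t)
  have h2 : HasDerivAt (fun x => Phi l g t x) (F' (0, 1)) t := by
    have := hF.comp_hasDerivAt t ((hasDerivAt_const t t).prodMk (hasDerivAt_id t))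
    exact this
  have h1 : HasDerivAt (fun x => Phi l g x t) (F' (1, 0)) t := by
    have hx : HasDerivAt (fun x : ℝ => (x, t)) ((1:ℝ), (0:ℝ)) t := (hasDerivAt_id t).prodMk (hasDerivAt_const t t)
    have := HasFDerivAt.comp_hasDerivAt (f := fun x : ℝ => (x, t)) t hF hx
    exact this
  have h3 : HasDerivAt (fun x => Phi l g x x) (F' (1, 1)) t := by
    have hx : HasDerivAt (fun x : ℝ => (x, x)) ((1:ℝ), (1:ℝ)) t := (hasDerivAt_id t).prodMk (hasDerivAt_id t)
    have := HasFDerivAt.comp_hasDerivAt (f := fun x : ℝ => (x, x)) t hF hx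
    exact this
  have e1 : F' (1, 0) = F' (0, 1) := by
    have : (fun x => Phi l g x t) = fun x => Phi l g t x := funext fun x => Phi_symm h hgs x t
    rw [this] at h1
    exact h1.unique h2
  have e2 : F' (1, 1) = F' (1, 0) + F' (0, 1) := by rw [← map_add]; simp
  have hinv : ∀ x, (deriv l x)⁻¹ = (starRingEnd ℂ) (deriv l x) := by
    intro x; rw [Complex.inv_def, Complex.normSq_eq_norm_sq, h.arc x]; simp
  have e3 : (fun x => Phi l g x x) = fun x => ((starRingEnd ℂ) (deriv l x)) ^ 2 := by
    funext x
    simp only [Phi, if_true, hg]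
    rw [deriv_conj h.sp.diff, div_eq_mul_inv, hinv]; ring
  have hdd : HasDerivAt (fun x => (starRingEnd ℂ) (deriv l x)) ((starRingEnd ℂ) (deriv (deriv l) t)) t := by
    have := (h.sp.deriv.conj.diff t).hasDerivAt
    rwa [deriv_conj h.sp.deriv.diff] at this
  rw [e3] at h3
  have e4 := h3.unique (hdd.pow 2)
  have e5 : F' (0, 1) = (starRingEnd ℂ) (deriv l t) * (starRingEnd ℂ) (deriv (deriv l) t) := by
    rw [e2, e1] at e4
    have : 2 * F' (0, 1) = 2 * ((starRingEnd ℂ) (deriv l t) * (starRingEnd ℂ) (deriv (deriv l) t)) := by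
      rw [two_mul, e4]; push_cast; ring
    exact mul_left_cancel₀ two_ne_zero this
  have e6 : Phi l g t t = ((starRingEnd ℂ) (deriv l t)) ^ 2 := congrFun e3 t
  unfold Ks
  rw [show deriv (Phi l g t) t = _ from h2.deriv, e5, e6]
  have hn : (starRingEnd ℂ) (deriv l t) * deriv l t = 1 := by
    rw [← hinv, inv_mul_cancel₀ (h.ne t)]
  have : Complex.I / 2 * ((starRingEnd ℂ) (deriv l t) * (starRingEnd ℂ) (deriv (deriv l) t)) *
      (starRingEnd ℂ) (((starRingEnd ℂ) (deriv l t)) ^ 2) =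
      Complex.I / 2 * ((starRingEnd ℂ) (deriv (deriv l) t) * deriv l t) := by
    simp only [map_pow, Complex.conj_conj]
    linear_combination (Complex.I / 2 * ((starRingEnd ℂ) (deriv (deriv l) t) * deriv l t)) * hn
  rw [this]
  simp [dotR, normalv, Complex.mul_re, Complex.mul_im]

theorem Ks_deriv1 (h : Crv L l) {s t : ℝ} (hst : l t ≠ l s) :
    deriv (fun s => Ks l s t) s = (deriv l t * deriv l s / (l t - l s) ^ 2).im := by
  have hlc := h.sm.continuous
  have hw : l t - l s ≠ 0 := sub_ne_zero.2 hst
  have hd : HasDerivAt l (deriv l s) s := (h.sp.diff s).hasDerivAt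
  have hq := (hasDerivAt_const s (deriv l t)).div (hd.const_sub (l t)) hw
  have hev : ∀ᶠ x in 𝓝 s, l t ≠ l x := by
    filter_upwards [hlc.continuousAt.eventually_ne (Ne.symm hst)] with x hx using Ne.symm hx
  have hq2 := Complex.imCLM.hasFDerivAt.comp_hasDerivAt s hq
  have : HasDerivAt (fun s => Ks l s t) _ s := hq2.congr_of_eventuallyEq (by
    filter_upwards [hev] with x hx
    rw [Ks_of_ne h hx]; simp)
  rw [this.deriv]
  simp

theorem Ks_deriv1_symm (h : Crv L l) {s t : ℝ} (hst : l t ≠ l s) :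
    deriv (fun s => Ks l s t) s = deriv (fun x => Ks l x s) t := by
  rw [Ks_deriv1 h hst, Ks_deriv1 h (Ne.symm hst)]
  congr 1
  rw [mul_comm, ← neg_sub (l s), neg_sq]

/-- `∫ Ks l s t dt` does not depend on `s` -/
theorem Ks_int_const (h : Crv L l) (s s' : ℝ) :
    ∫ t in (0:ℝ)..L, Ks l s t = ∫ t in (0:ℝ)..L, Ks l s' t := by
  have hd : ∀ s, HasDerivAt (fun s => ∫ t in (0:ℝ)..L, Ks l s t) 0 s := by
    intro s
    have h1 := hasDerivAt_param (Ks_contDiff h) 0 L s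
    have : ∫ t in (0:ℝ)..L, deriv (fun x => Ks l x t) s = 0 := by
      have e : ∫ t in (0:ℝ)..L, deriv (fun x => Ks l x t) s
          = ∫ t in (0:ℝ)..L, deriv (fun x => Ks l x s) t := by
        apply intervalIntegral.integral_congr_ae
        filter_upwards [h.ae_ne s] with t ht _ using Ks_deriv1_symm h ht
      rw [e, intervalIntegral.integral_deriv_eq_sub]
      · have := Ks_per_left h 0 s
        rw [zero_add] at this; rw [this, sub_self]
      · intro x _
        exact (contDiff_left (Ks_contDiff h) s).differentiable (by simp) x
      · exact ((contDiff_infty_iff_deriv.1 (contDiff_left (Ks_contDiff h) s)).2.continuous).intervalIntegrable _ _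
    rwa [this] at h1
  exact is_const_of_deriv_eq_zero (fun s => (hd s).differentiableAt) (fun s => (hd s).deriv) s s'

theorem angle_total {φ φ' : ℝ → ℂ} {k : ℝ → ℝ} (hk : Continuous k) {a b : ℝ} (hab : a < b)
    (hφ : ∀ t ∈ Set.Ioo a b, φ t ∈ Complex.slitPlane ∧ HasDerivAt φ (φ' t) t ∧ (φ' t / φ t).im = k t)
    {w : ℂ} (hw : w.re = 0) (hw' : w ≠ 0) (c : ℝ → ℝ) (hc : ∀ η, 0 < η → 0 < c η)
    (h1 : Filter.Tendsto (fun η => (c η : ℂ) * φ (a + η)) (𝓝[>] 0) (𝓝 w))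
    (h2 : Filter.Tendsto (fun η => (c η : ℂ) * φ (b - η)) (𝓝[>] 0) (𝓝 (-w))) :
    ∫ t in a..b, k t = π ∨ ∫ t in a..b, k t = -π := by
  have hwi : w.im ≠ 0 := fun h => hw' (Complex.ext hw h)
  have s1 : w ∈ Complex.slitPlane := Complex.mem_slitPlane_iff.2 (Or.inr hwi)
  have s2 : -w ∈ Complex.slitPlane := Complex.mem_slitPlane_iff.2 (Or.inr (by simpa using hwi))
  have t1 := (Complex.continuousAt_arg s1).tendsto.comp h1
  have t2 := (Complex.continuousAt_arg s2).tendsto.comp h2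
  have t3 := t2.sub t1
  set G : ℝ → ℝ := fun x => ∫ t in (0:ℝ)..x, k t
  have hG : Continuous G := intervalIntegral.continuous_primitive (fun _ _ => hk.intervalIntegrable _ _) 0
  have t4 : Filter.Tendsto (fun η => G (b - η) - G (a + η)) (𝓝[>] 0) (𝓝 (G b - G a)) := by
    have : Continuous (fun η => G (b - η) - G (a + η)) := by fun_prop
    have := (this.tendsto 0).mono_left (nhdsWithin_le_nhds (s := Set.Ioi 0))
    simpa using this
  have hGi : ∀ x y, G y - G x = ∫ t in x..y, k t := fun x y =>
    intervalIntegral.integral_interval_sub_left (hk.intervalIntegrable _ _) (hk.intervalIntegrable _ _)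
  have hev : ∀ᶠ η in 𝓝[>] (0:ℝ), G (b - η) - G (a + η) =
      (Complex.arg ∘ fun η => (c η : ℂ) * φ (b - η)) η - (Complex.arg ∘ fun η => (c η : ℂ) * φ (a + η)) η := by
    have : Set.Ioo 0 ((b - a) / 2) ∈ 𝓝[>] (0:ℝ) := Ioo_mem_nhdsGT (by linarith)
    filter_upwards [this] with η hη
    obtain ⟨e1, e2⟩ := hη
    simp only [Function.comp]
    rw [Complex.arg_real_mul _ (hc η e1), Complex.arg_real_mul _ (hc η e1), hGi]
    rw [← Complex.log_im, ← Complex.log_im]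
    apply intervalIntegral.integral_eq_sub_of_hasDerivAt (f := fun t => (Complex.log (φ t)).im)
    · intro x hx
      rw [Set.uIcc_of_le (by linarith)] at hx
      obtain ⟨q1, q2, q3⟩ := hφ x ⟨by linarith [hx.1], by linarith [hx.2]⟩
      have := Complex.imCLM.hasFDerivAt.comp_hasDerivAt x (q2.clog_real q1)
      rw [← q3]
      exact this
    · exact hk.intervalIntegrable _ _
  have := tendsto_nhds_unique (t4.congr' hev) t3
  rw [hGi] at this
  rw [this]
  rcases lt_or_gt_of_ne hwi with hlt | hgt
  · left
    rw [Complex.arg_eq_neg_pi_div_two_iff.2 ⟨hw, hlt⟩, Complex.arg_eq_pi_div_two_iff.2 ⟨by simp [hw], by simpa using hlt⟩]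
    ring
  · right
    rw [Complex.arg_eq_pi_div_two_iff.2 ⟨hw, hgt⟩, Complex.arg_eq_neg_pi_div_two_iff.2 ⟨by simp [hw], by simpa using hgt⟩]
    ring

end FC


namespace FC
open scoped ContDiff Topology
variable {L : ℝ} {l : ℝ → ℂ}

theorem exists_per_min {f : ℝ → ℝ} (hf : Continuous f) (hp : Function.Periodic f L) (hL : 0 < L) :
    ∃ s, ∀ t, f s ≤ f t := by
  obtain ⟨s, _, hs⟩ := isCompact_Icc.exists_isMinOn (s := Set.Icc (0:ℝ) L) ⟨0, by simp [hL.le]⟩ hf.continuousOn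
  refine ⟨s, fun t => ?_⟩
  obtain ⟨y, hy, e⟩ := hp.exists_mem_Ico₀ hL t
  rw [e]
  exact hs ⟨hy.1, hy.2.le⟩

theorem tendsto_right (h : Crv L l) (s : ℝ) :
    Filter.Tendsto (fun η : ℝ => (l (s + η) - l s) / (η : ℂ)) (𝓝[>] 0) (𝓝 (deriv l s)) := by
  have hd : HasDerivAt l (deriv l s) s := (h.sp.diff s).hasDerivAt
  have := (hasDerivAt_iff_tendsto_slope_zero.1 hd).mono_left (nhdsWithin_mono (s := Set.Ioi 0) 0 (fun x hx => ne_of_gt hx))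
  refine this.congr fun η => ?_
  rw [Complex.real_smul, div_eq_inv_mul]; simp

theorem tendsto_left (h : Crv L l) (s : ℝ) :
    Filter.Tendsto (fun η : ℝ => (l (s + L - η) - l s) / (η : ℂ)) (𝓝[>] 0) (𝓝 (-deriv l s)) := by
  have hd : HasDerivAt (fun x => l (-x)) (-deriv l s) (-s) := by
    have h0 : HasDerivAt l (deriv l s) (- -s) := by rw [neg_neg]; exact (h.sp.diff s).hasDerivAt
    have := h0.scomp (-s) (hasDerivAt_neg (-s))
    rw [neg_one_smul] at this
    exact this
  have := (hasDerivAt_iff_tendsto_slope_zero.1 hd).mono_left (nhdsWithin_mono (s := Set.Ioi 0) 0 (fun x hx => ne_of_gt hx))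
  refine this.congr fun η => ?_
  rw [Complex.real_smul, div_eq_inv_mul, show s + L - η = (s - η) + L by ring, h.per]; simp
  left
  congr 1
  ring_nf

theorem Crv.ne_Ioo (h : Crv L l) {s t : ℝ} (ht : t ∈ Set.Ioo s (s + L)) : l t ≠ l s := by
  intro hc
  obtain ⟨m, hm⟩ := (h.eq_iff s t).1 hc
  obtain ⟨h1, h2⟩ := ht
  have hL := h.pos
  have h3 : (0:ℝ) < m := by by_contra hh; push Not at hh; nlinarith
  have h4 : (m:ℝ) < 1 := by by_contra hh; push Not at hh; nlinarith
  have h5 : 0 < m := by exact_mod_cast h3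
  have h6 : m < 1 := by exact_mod_cast h4
  omega

theorem Ks_int_pm (h : Crv L l) (s : ℝ) :
    ∫ t in (0:ℝ)..L, Ks l s t = π ∨ ∫ t in (0:ℝ)..L, Ks l s t = -π := by
  have hlc := h.sm.continuous
  obtain ⟨s0, hs0⟩ := exists_per_min (f := fun t => (l t).im) (by fun_prop) (fun t => by simp [h.per t]) h.pos
  have him : (deriv l s0).im = 0 := by
    have hd : HasDerivAt (fun t => (l t).im) (deriv l s0).im s0 :=
      Complex.imCLM.hasFDerivAt.comp_hasDerivAt s0 (h.sp.diff s0).hasDerivAt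
    exact IsLocalMin.hasDerivAt_eq_zero (Filter.Eventually.of_forall hs0) hd
  rw [Ks_int_const h s s0]
  have hp : Function.Periodic (Ks l s0) L := fun t => Ks_per_right h s0 t
  have e : ∫ t in (0:ℝ)..L, Ks l s0 t = ∫ t in s0..(s0 + L), Ks l s0 t := by
    have := hp.intervalIntegral_add_eq 0 s0
    rwa [zero_add] at this
  rw [e]
  have hk : Continuous (Ks l s0) := (contDiff_right (Ks_contDiff h) s0).continuous
  refine angle_total (φ := fun t => -Complex.I * (l t - l s0)) (φ' := fun t => -Complex.I * deriv l t)
    hk (by linarith [h.pos]) ?_ (w := -Complex.I * deriv l s0) (by simp [him]) ?_ (fun η => 1 / η) ?_ ?_ ?_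
  · intro t ht
    have hne := h.ne_Ioo ht
    refine ⟨?_, ?_, ?_⟩
    · rw [Complex.mem_slitPlane_iff]
      by_cases hc : (l t - l s0).im = 0
      · right
        have : (l t - l s0).re ≠ 0 := fun h0 => (sub_ne_zero.2 hne) (Complex.ext h0 hc)
        intro h0; apply this; simp at h0 ⊢; linarith
      · left
        have h1 : (l s0).im ≤ (l t).im := hs0 t
        have h2 : (l t).im - (l s0).im ≠ 0 := by simpa using hc
        have : 0 < (l t).im - (l s0).im := lt_of_le_of_ne (by linarith) (Ne.symm h2)
        simp; linarith
    · exact ((h.sp.diff t).hasDerivAt.sub_const _).const_mul _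
    · rw [mul_div_mul_left _ _ (by simp), Ks_of_ne h hne]
  · simpa using h.ne s0
  · intro η hη; positivity
  · have := (tendsto_right h s0).const_mul (-Complex.I)
    refine this.congr fun η => ?_
    push_cast; ring
  · have := (tendsto_left h s0).const_mul (-Complex.I)
    rw [show -(-Complex.I * deriv l s0) = -Complex.I * -deriv l s0 by ring]
    refine this.congr fun η => ?_
    push_cast; ring

theorem Ks_int_pm2 (h : Crv L l) {z₀ : ℂ} (hz : ∀ s, l s ≠ z₀)
    (hw : (∫ t in (0:ℝ)..L, deriv l t / (l t - z₀)) = 2 * (π : ℂ) * Complex.I) (s : ℝ) :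
    2 * π - ∫ t in (0:ℝ)..L, Ks l s t = π ∨ 2 * π - ∫ t in (0:ℝ)..L, Ks l s t = -π := by
  have hlc := h.sm.continuous
  have hlc' := h.sp.deriv.cont
  obtain ⟨s0, hs0⟩ := exists_per_min (f := fun t => Complex.normSq (l t - z₀)) (by fun_prop)
    (fun t => by simp [h.per t]) h.pos
  have hdz : l s0 - z₀ ≠ 0 := sub_ne_zero.2 (hz s0)
  have hre : (l s0 - z₀).re * (deriv l s0).re + (l s0 - z₀).im * (deriv l s0).im = 0 := by
    have hd := ((h.sp.diff s0).hasDerivAt.sub_const z₀)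
    have hr : HasDerivAt (fun t => (l t - z₀).re) (deriv l s0).re s0 :=
      Complex.reCLM.hasFDerivAt.comp_hasDerivAt s0 hd
    have hi : HasDerivAt (fun t => (l t - z₀).im) (deriv l s0).im s0 :=
      Complex.imCLM.hasFDerivAt.comp_hasDerivAt s0 hd
    have := (hr.mul hr).add (hi.mul hi)
    have := IsLocalMin.hasDerivAt_eq_zero (f := fun t => Complex.normSq (l t - z₀)) (a := s0)
      (Filter.Eventually.of_forall hs0) this
    linarith
  rw [Ks_int_const h s s0]
  have hk0 : Continuous (Ks l s0) := (contDiff_right (Ks_contDiff h) s0).continuous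
  have hq : Continuous (fun t => deriv l t / (l t - z₀)) :=
    hlc'.div (by fun_prop) (fun t => sub_ne_zero.2 (hz t))
  have hk : Continuous (fun t => (deriv l t / (l t - z₀)).im - Ks l s0 t) :=
    (Complex.continuous_im.comp hq).sub hk0
  have hp : Function.Periodic (fun t => (deriv l t / (l t - z₀)).im - Ks l s0 t) L := fun t => by
    simp only [Ks_per_right h s0 t, h.per t, h.sp.deriv.per t]
  have e0 : ∫ t in (0:ℝ)..L, (deriv l t / (l t - z₀)).im = 2 * π := by
    have := Complex.imCLM.intervalIntegral_comp_comm (hq.intervalIntegrable (μ := volume) 0 L)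
    simp only [Complex.imCLM_apply] at this
    rw [this, hw]; simp
  have e : 2 * π - ∫ t in (0:ℝ)..L, Ks l s0 t =
      ∫ t in s0..(s0 + L), ((deriv l t / (l t - z₀)).im - Ks l s0 t) := by
    have := hp.intervalIntegral_add_eq s0 0
    rw [this, zero_add, intervalIntegral.integral_sub, e0]
    · exact (Complex.continuous_im.comp hq).intervalIntegrable _ _
    · exact hk0.intervalIntegrable _ _
  rw [e]
  have hl2 := Complex.normSq_pos.2 (h.ne s0)
  refine angle_total (φ := fun t => (l t - z₀) / (l t - l s0))
    (φ' := fun t => (deriv l t * (l t - l s0) - (l t - z₀) * deriv l t) / (l t - l s0) ^ 2)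
    hk (by linarith [h.pos]) ?_ (w := (l s0 - z₀) / deriv l s0) ?_ ?_ (fun η => η) ?_ ?_ ?_
  · intro t ht
    have hne := sub_ne_zero.2 (h.ne_Ioo ht)
    have hnz := sub_ne_zero.2 (hz t)
    refine ⟨?_, ?_, ?_⟩
    · rw [Complex.mem_slitPlane_iff]
      left
      have h1 := hs0 t
      simp only [Complex.normSq_apply] at h1
      have h2 := Complex.normSq_pos.2 hne
      rw [Complex.div_re, ← add_div]
      apply div_pos _ h2
      rw [Complex.normSq_apply] at h2
      simp only [Complex.sub_re, Complex.sub_im] at *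
      nlinarith
    · have hd := (h.sp.diff t).hasDerivAt
      exact (hd.sub_const z₀).div (hd.sub_const (l s0)) hne
    · rw [Ks_of_ne h (h.ne_Ioo ht), ← Complex.sub_im]
      congr 1
      field_simp
  · rw [Complex.div_re, ← add_div, hre, zero_div]
  · exact div_ne_zero hdz (h.ne s0)
  · intro η hη; exact hη
  · have h1 : Filter.Tendsto (fun η : ℝ => l (s0 + η) - z₀) (𝓝[>] 0) (𝓝 (l s0 - z₀)) := by
      have : Continuous (fun η : ℝ => l (s0 + η) - z₀) := by fun_prop
      simpa using (this.tendsto 0).mono_left (nhdsWithin_le_nhds (s := Set.Ioi 0))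
    refine (h1.div (tendsto_right h s0) (h.ne s0)).congr fun η => ?_
    simp only [Pi.div_apply, div_div_eq_mul_div]; ring
  · have h1 : Filter.Tendsto (fun η : ℝ => l (s0 + L - η) - z₀) (𝓝[>] 0) (𝓝 (l s0 - z₀)) := by
      have : Continuous (fun η : ℝ => l (s0 + L - η) - z₀) := by fun_prop
      simpa [h.per s0] using (this.tendsto 0).mono_left (nhdsWithin_le_nhds (s := Set.Ioi 0))
    rw [← div_neg]
    refine (h1.div (tendsto_left h s0) (neg_ne_zero.2 (h.ne s0))).congr fun η => ?_
    simp only [Pi.div_apply, div_div_eq_mul_div]; ring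

/-- a positively oriented curve -/
def Ori (L : ℝ) (l : ℝ → ℂ) : Prop := ∀ s, ∫ t in (0:ℝ)..L, Ks l s t = π

theorem ori_of (h : Crv L l) {z₀ : ℂ} (hz : ∀ s, l s ≠ z₀)
    (hw : (∫ t in (0:ℝ)..L, deriv l t / (l t - z₀)) = 2 * (π : ℂ) * Complex.I) : Ori L l := by
  intro s
  have hpi := Real.pi_pos
  rcases Ks_int_pm h s with h1 | h1
  · exact h1
  · rcases Ks_int_pm2 h hz hw s with h2 | h2 <;> linarith

end FC


namespace FC
open scoped ContDiff Topology
variable {L : ℝ} {l : ℝ → ℂ}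

/-- double integral -/
noncomputable def DI (L : ℝ) (F : ℝ → ℝ → ℂ) : ℂ := ∫ s in (0:ℝ)..L, ∫ t in (0:ℝ)..L, F s t

theorem inner_cont {F : ℝ → ℝ → ℂ} (hF : Continuous (fun p : ℝ × ℝ => F p.1 p.2)) :
    Continuous (fun s => ∫ t in (0:ℝ)..L, F s t) :=
  intervalIntegral.continuous_parametric_intervalIntegral_of_continuous' (f := F) hF 0 L

theorem cont_r {F : ℝ → ℝ → ℂ} (hF : Continuous (fun p : ℝ × ℝ => F p.1 p.2)) (s : ℝ) :
    Continuous (fun t => F s t) := hF.comp (by fun_prop : Continuous fun t : ℝ => (s, t))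

theorem DI_swap {F : ℝ → ℝ → ℂ} (hF : Continuous (fun p : ℝ × ℝ => F p.1 p.2)) :
    DI L F = DI L (fun s t => F t s) := by
  unfold DI
  apply intervalIntegral_intervalIntegral_swap
  have : IntegrableOn (Function.uncurry F) (Set.uIcc 0 L ×ˢ Set.uIcc 0 L) (volume.prod volume) :=
    (hF.continuousOn (s := Set.uIcc 0 L ×ˢ Set.uIcc 0 L)).integrableOn_compact (isCompact_uIcc.prod isCompact_uIcc)
  exact this.mono_set (Set.prod_mono Set.uIoc_subset_uIcc Set.uIoc_subset_uIcc)

theorem DI_congr (h : Crv L l) {F G : ℝ → ℝ → ℂ} (hFG : ∀ s t, l t ≠ l s → F s t = G s t) :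
    DI L F = DI L G := by
  unfold DI
  congr 1; funext s
  apply intervalIntegral.integral_congr_ae
  filter_upwards [h.ae_ne s] with t ht _ using hFG s t ht

theorem DI_sub {F G : ℝ → ℝ → ℂ} (hF : Continuous (fun p : ℝ × ℝ => F p.1 p.2))
    (hG : Continuous (fun p : ℝ × ℝ => G p.1 p.2)) :
    DI L (fun s t => F s t - G s t) = DI L F - DI L G := by
  unfold DI
  rw [← intervalIntegral.integral_sub ((inner_cont hF).intervalIntegrable _ _)
    ((inner_cont hG).intervalIntegrable _ _)]
  congr 1; funext s
  rw [intervalIntegral.integral_sub ((cont_r hF s).intervalIntegrable _ _) ((cont_r hG s).intervalIntegrable _ _)]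

theorem DI_const_mul (c : ℂ) (F : ℝ → ℝ → ℂ) : DI L (fun s t => c * F s t) = c * DI L F := by
  simp [DI]

theorem tendsto_DI (h : Crv L l) {ι : Type} {fl : Filter ι} [fl.IsCountablyGenerated]
    {F : ι → ℝ → ℝ → ℂ} {F0 : ℝ → ℝ → ℂ} (C : ℝ)
    (hF : ∀ᶠ i in fl, Continuous (fun p : ℝ × ℝ => F i p.1 p.2))
    (hb : ∀ᶠ i in fl, ∀ s ∈ Set.Icc 0 L, ∀ t ∈ Set.Icc 0 L, ‖F i s t‖ ≤ C)
    (hl : ∀ s t, l t ≠ l s → Filter.Tendsto (fun i => F i s t) fl (𝓝 (F0 s t))) :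
    Filter.Tendsto (fun i => DI L (F i)) fl (𝓝 (DI L F0)) := by
  have hL := h.pos
  have hsub : ∀ x, x ∈ Set.uIoc 0 L → x ∈ Set.Icc 0 L := by
    intro x hx; rw [Set.uIoc_of_le hL.le] at hx; exact ⟨hx.1.le, hx.2⟩
  unfold DI
  apply intervalIntegral.tendsto_integral_filter_of_dominated_convergence (fun _ => C * L)
  · filter_upwards [hF] with i hi using (inner_cont hi).aestronglyMeasurable
  · filter_upwards [hb] with i hi
    refine Filter.Eventually.of_forall fun s hs => ?_
    have := intervalIntegral.norm_integral_le_of_norm_le_const (a := 0) (b := L) (C := C)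
      (f := fun t => F i s t) (fun t ht => hi s (hsub s hs) t (hsub t ht))
    simpa [abs_of_pos hL] using this
  · exact intervalIntegrable_const
  · refine Filter.Eventually.of_forall fun s hs => ?_
    apply intervalIntegral.tendsto_integral_filter_of_dominated_convergence (fun _ => C)
    · filter_upwards [hF] with i hi using (cont_r hi s).aestronglyMeasurable
    · filter_upwards [hb] with i hi
      exact Filter.Eventually.of_forall fun t ht => hi s (hsub s hs) t (hsub t ht)
    · exact intervalIntegrable_const
    · filter_upwards [h.ae_ne s] with t ht _ using hl s t ht

/-- squared distance -/
noncomputable def rho (l : ℝ → ℂ) (s t : ℝ) : ℝ := Complex.normSq (l t - l s)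

theorem rho_nonneg (s t : ℝ) : 0 ≤ rho l s t := Complex.normSq_nonneg _

theorem rho_cont (h : Crv L l) : Continuous (fun p : ℝ × ℝ => rho l p.1 p.2) := by
  have := h.sm.continuous
  unfold rho; fun_prop

theorem rho_symm (s t : ℝ) : rho l s t = rho l t s := by
  unfold rho; rw [← neg_sub, Complex.normSq_neg]

theorem rho_eq (s t : ℝ) : (rho l s t : ℂ) = (l t - l s) * (starRingEnd ℂ) (l t - l s) := by
  unfold rho; rw [Complex.mul_conj]

theorem bound_DI {F : ℝ → ℝ → ℂ} (hF : Continuous (fun p : ℝ × ℝ => F p.1 p.2)) :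
    ∃ C, ∀ s ∈ Set.Icc 0 L, ∀ t ∈ Set.Icc 0 L, ‖F s t‖ ≤ C := by
  obtain ⟨C, hC⟩ := ((isCompact_Icc (a := (0:ℝ)) (b := L)).prod (isCompact_Icc (a := (0:ℝ)) (b := L))).exists_bound_of_continuousOn
    hF.continuousOn
  exact ⟨C, fun s hs t ht => hC (s, t) ⟨hs, ht⟩⟩

theorem reg_tendsto (h : Crv L l) {F : ℝ → ℝ → ℂ} (hF : Continuous (fun p : ℝ × ℝ => F p.1 p.2)) :
    Filter.Tendsto (fun ε : ℝ => DI L (fun s t => F s t * ((rho l s t / (rho l s t + ε) : ℝ) : ℂ)))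
      (𝓝[>] 0) (𝓝 (DI L F)) := by
  obtain ⟨C, hC⟩ := bound_DI (L := L) hF
  have hpos : ∀ᶠ ε : ℝ in 𝓝[>] 0, 0 < ε := eventually_mem_nhdsWithin
  have hr := rho_cont h
  apply tendsto_DI h C
  · filter_upwards [hpos] with ε hε
    apply hF.mul
    apply Complex.continuous_ofReal.comp
    exact hr.div (hr.add continuous_const) (fun p => by have := rho_nonneg (l := l) p.1 p.2; positivity)
  · filter_upwards [hpos] with ε hε s hs t ht
    have := rho_nonneg (l := l) s t
    rw [norm_mul, Complex.norm_real, Real.norm_of_nonneg (by positivity)]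
    have h1 : rho l s t / (rho l s t + ε) ≤ 1 := by rw [div_le_one (by positivity)]; linarith
    calc _ ≤ ‖F s t‖ * 1 := by gcongr
      _ ≤ C := by rw [mul_one]; exact hC s hs t ht
  · intro s t hst
    have hne : rho l s t ≠ 0 := by
      unfold rho; rw [Ne, Complex.normSq_eq_zero]; exact sub_ne_zero.2 hst
    have : Filter.Tendsto (fun ε : ℝ => rho l s t / (rho l s t + ε)) (𝓝[>] 0) (𝓝 (rho l s t / (rho l s t + 0))) := by
      apply Filter.Tendsto.mono_left _ nhdsWithin_le_nhds
      exact Filter.Tendsto.div tendsto_const_nhds (tendsto_const_nhds.add Filter.tendsto_id) (by simpa using hne)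
    rw [add_zero, div_self hne] at this
    have h2 := (Complex.continuous_ofReal.tendsto _).comp this
    simpa using h2.const_mul (F s t)

/-- Cauchy type operator -/
noncomputable def Top (L : ℝ) (l g : ℝ → ℂ) (s : ℝ) : ℂ := ∫ t in (0:ℝ)..L, Phi l g s t * deriv l t

theorem Phi_cont (h : Crv L l) {g : ℝ → ℂ} (hg : SP L g) : Continuous (fun p : ℝ × ℝ => Phi l g p.1 p.2) :=
  (Phi_contDiff h hg).continuous

theorem Top_sp (h : Crv L l) {g : ℝ → ℂ} (hg : SP L g) : SP L (Top L l g) := by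
  constructor
  · apply contDiff_param (E := ℝ) 0 L (fun s t => Phi l g s t * deriv l t)
    exact (Phi_contDiff h hg).mul (h.sp.deriv.sm.comp contDiff_snd)
  · intro s
    unfold Top
    rw [Phi_congr_left (h.per s) (hg.per s)]

theorem rho_hasDerivAt (h : Crv L l) (s t : ℝ) :
    HasDerivAt (fun t => rho l s t) (2 * (deriv l t * (starRingEnd ℂ) (l t - l s)).re) t := by
  have hd := ((h.sp.diff t).hasDerivAt.sub_const (l s))
  have hr : HasDerivAt (fun t => (l t - l s).re) (deriv l t).re t :=
    Complex.reCLM.hasFDerivAt.comp_hasDerivAt t hd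
  have hi : HasDerivAt (fun t => (l t - l s).im) (deriv l t).im t :=
    Complex.imCLM.hasFDerivAt.comp_hasDerivAt t hd
  refine ((hr.mul hr).add (hi.mul hi)).congr_deriv ?_
  simp; ring

theorem rho_Ks (h : Crv L l) (s t : ℝ) :
    (deriv l t * (starRingEnd ℂ) (l t - l s)).im = Ks l s t * rho l s t := by
  by_cases hc : l t = l s
  · simp [hc, rho]
  · rw [Ks_of_ne h hc, rho, Complex.div_im]
    have := Complex.normSq_pos.2 (sub_ne_zero.2 hc)
    set w := l t - l s
    rw [sub_mul, div_mul_cancel₀ _ this.ne', div_mul_cancel₀ _ this.ne']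
    simp; ring

theorem rho_log_deriv (h : Crv L l) (s t : ℝ) {ε : ℝ} (hε : 0 < ε) :
    HasDerivAt (fun t => (1/2) * Real.log (rho l s t + ε))
      ((deriv l t * (starRingEnd ℂ) (l t - l s)).re / (rho l s t + ε)) t := by
  have := rho_nonneg (l := l) s t
  have := (((rho_hasDerivAt h s t).add_const ε).log (by positivity)).const_mul (1/2)
  refine this.congr_deriv ?_
  ring

theorem rho_per (h : Crv L l) (s t : ℝ) : rho l s (t + L) = rho l s t := by simp [rho, h.per t]

theorem c_eps (h : Crv L l) (s : ℝ) {ε : ℝ} (hε : 0 < ε) :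
    ∫ t in (0:ℝ)..L, deriv l t * (starRingEnd ℂ) (l t - l s) / ((rho l s t + ε : ℝ) : ℂ)
      = ∫ t in (0:ℝ)..L, Complex.I * Ks l s t * ((rho l s t / (rho l s t + ε) : ℝ) : ℂ) := by
  have hlc := h.sm.continuous
  have hlc' := h.sp.deriv.cont
  have hr : Continuous (fun t => rho l s t) := (rho_cont h).comp (by fun_prop : Continuous fun t : ℝ => (s, t))
  have hk : Continuous (fun t => Ks l s t) := (Ks_cont h).comp (by fun_prop : Continuous fun t : ℝ => (s, t))
  have hne : ∀ t, rho l s t + ε ≠ 0 := fun t => by have := rho_nonneg (l := l) s t; positivity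
  have hz : ∫ t in (0:ℝ)..L, (deriv l t * (starRingEnd ℂ) (l t - l s)).re / (rho l s t + ε) = 0 := by
    rw [intervalIntegral.integral_eq_sub_of_hasDerivAt (fun t _ => rho_log_deriv h s t hε)]
    · have := rho_per h s 0
      rw [zero_add] at this; rw [this]; ring
    · apply Continuous.intervalIntegrable
      exact Continuous.div (by fun_prop) (by fun_prop) hne
  have hdec : ∀ t, deriv l t * (starRingEnd ℂ) (l t - l s) / ((rho l s t + ε : ℝ) : ℂ) =
      (((deriv l t * (starRingEnd ℂ) (l t - l s)).re / (rho l s t + ε) : ℝ) : ℂ) +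
      Complex.I * Ks l s t * ((rho l s t / (rho l s t + ε) : ℝ) : ℂ) := by
    intro t
    have e := Complex.re_add_im (deriv l t * (starRingEnd ℂ) (l t - l s))
    rw [rho_Ks h] at e
    rw [← e]
    push_cast
    simp only [Complex.add_re, Complex.mul_re, Complex.ofReal_re, Complex.ofReal_im, Complex.I_re, Complex.I_im]
    simp
    ring
  simp_rw [hdec]
  rw [intervalIntegral.integral_add, intervalIntegral.integral_ofReal, hz]
  · simp
  · apply Continuous.intervalIntegrable
    apply Complex.continuous_ofReal.comp
    exact Continuous.div (by fun_prop) (by fun_prop) hne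
  · apply Continuous.intervalIntegrable
    apply Continuous.mul (by fun_prop)
    apply Complex.continuous_ofReal.comp
    exact Continuous.div (by fun_prop) (by fun_prop) hne

theorem Top_int (h : Crv L l) (ho : Ori L l) {G : ℝ → ℂ} (hG : SP L G) :
    ∫ s in (0:ℝ)..L, Top L l G s * deriv l s = -2 * π * Complex.I * ∫ s in (0:ℝ)..L, G s * deriv l s := by
  have hlc := h.sm.continuous
  have hlc' := h.sp.deriv.cont
  have hGc := hG.cont
  have hr := rho_cont h
  have hk := Ks_cont h
  have e1 : ∫ s in (0:ℝ)..L, Top L l G s * deriv l s = DI L (fun s t => Phi l G s t * deriv l t * deriv l s) := by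
    unfold DI Top
    congr 1; funext s
    rw [intervalIntegral.integral_mul_const]
  have c1 : Continuous (fun p : ℝ × ℝ => Phi l G p.1 p.2 * deriv l p.2 * deriv l p.1) := by
    have := Phi_cont h hG
    fun_prop
  have c2 : Continuous (fun p : ℝ × ℝ => G p.1 * deriv l p.1 * (Complex.I * Ks l p.1 p.2)) := by
    fun_prop
  have e2 : DI L (fun s t => G s * deriv l s * (Complex.I * Ks l s t)) =
      π * Complex.I * ∫ s in (0:ℝ)..L, G s * deriv l s := by
    unfold DI
    rw [← intervalIntegral.integral_const_mul]
    congr 1; funext s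
    rw [intervalIntegral.integral_const_mul, intervalIntegral.integral_const_mul,
      intervalIntegral.integral_ofReal, ho s]
    ring
  have t1 := reg_tendsto h (F := fun s t => Phi l G s t * deriv l t * deriv l s) c1
  have t2 := (reg_tendsto h (F := fun s t => G s * deriv l s * (Complex.I * Ks l s t)) c2).const_mul (-2)
  rw [e1]
  rw [e2] at t2
  rw [show -2 * π * Complex.I * ∫ s in (0:ℝ)..L, G s * deriv l s =
    -2 * (π * Complex.I * ∫ s in (0:ℝ)..L, G s * deriv l s) by ring]
  refine tendsto_nhds_unique (t1.congr' ?_) t2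
  have hpos : ∀ᶠ ε : ℝ in 𝓝[>] 0, 0 < ε := eventually_mem_nhdsWithin
  filter_upwards [hpos] with ε hε
  have hne : ∀ p : ℝ × ℝ, ((rho l p.1 p.2 + ε : ℝ) : ℂ) ≠ 0 := fun p => by
    have := rho_nonneg (l := l) p.1 p.2
    exact Complex.ofReal_ne_zero.2 (by positivity)
  set k : ℝ → ℝ → ℂ := fun s t => (starRingEnd ℂ) (l t - l s) / ((rho l s t + ε : ℝ) : ℂ) * deriv l t * deriv l s with hkd
  have kc : Continuous (fun p : ℝ × ℝ => k p.1 p.2) := by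
    simp only [hkd]
    apply Continuous.mul (Continuous.mul (Continuous.div _ _ hne) _) _ <;> fun_prop
  have kanti : ∀ s t, k t s = - k s t := by
    intro s t
    simp only [hkd]
    rw [rho_symm t s, ← neg_sub (l t) (l s), map_neg]; ring
  have f1 : DI L (fun s t => Phi l G s t * deriv l t * deriv l s * ((rho l s t / (rho l s t + ε) : ℝ) : ℂ)) =
      DI L (fun s t => G t * k s t - G s * k s t) := by
    congr 1; funext s t
    rw [← sub_mul, ← Phi_mul h hG, Complex.ofReal_div, rho_eq]
    simp only [hkd]
    ring
  rw [f1, DI_sub (by fun_prop) (by fun_prop), DI_swap (F := fun s t => G t * k s t) (by fun_prop)]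
  rw [show (fun s t => G s * k t s) = fun s t => G s * -k s t from by funext s t; rw [kanti s t]]
  have f2 : DI L (fun s t => G s * -k s t) = - DI L (fun s t => G s * k s t) := by
    rw [← neg_one_mul (DI L _), ← DI_const_mul]
    congr 1; funext s t; ring
  have f3 : DI L (fun s t => G s * k s t) =
      DI L fun s t => G s * deriv l s * (Complex.I * ↑(Ks l s t)) * ↑(rho l s t / (rho l s t + ε)) := by
    unfold DI
    congr 1; funext s
    have := c_eps h s hε
    calc _ = G s * deriv l s * ∫ t in (0:ℝ)..L, deriv l t * (starRingEnd ℂ) (l t - l s) / ((rho l s t + ε : ℝ) : ℂ) := by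
          rw [← intervalIntegral.integral_const_mul]
          congr 1; funext t; simp only [hkd]; ring
      _ = _ := by
          rw [this, ← intervalIntegral.integral_const_mul]
          congr 1; funext t; ring
  rw [f2, ← f3]; ring

theorem Top_Top (h : Crv L l) (ho : Ori L l) {f : ℝ → ℂ} (hf : SP L f) (s : ℝ) :
    Top L l (Top L l f) s = -2 * π * Complex.I * Top L l f s := by
  have hG : SP L (Phi l f s) := Phi_sp h hf s
  have key := Top_int h ho hG
  rw [show Top L l f s = ∫ t in (0:ℝ)..L, Phi l f s t * deriv l t from rfl, ← key]
  have hlc' := h.sp.deriv.cont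
  rw [Top]
  apply intervalIntegral.integral_congr_ae
  filter_upwards [h.ae_ne s] with t ht _
  congr 1
  rw [Phi, if_neg ht]
  unfold Top
  have i1 : ∀ s, Continuous (fun r => Phi l f s r * deriv l r) := fun s => (Phi_sp h hf s).cont.mul hlc'
  rw [← intervalIntegral.integral_sub ((i1 t).intervalIntegrable _ _) ((i1 s).intervalIntegrable _ _),
    ← intervalIntegral.integral_div]
  apply intervalIntegral.integral_congr_ae
  filter_upwards [h.ae_ne s, h.ae_ne t] with r hr1 hr2 _
  simp only [Phi, if_neg ht, if_neg hr1, if_neg hr2]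
  have a1 := sub_ne_zero.2 ht
  have a2 := sub_ne_zero.2 hr1
  have a3 := sub_ne_zero.2 hr2
  field_simp
  ring

end FC


namespace FC
open scoped ContDiff Topology
variable {L : ℝ} {l : ℝ → ℂ}

theorem Top_eq (h : Crv L l) (g : ℝ → ℂ) (s : ℝ) :
    Top L l g s = ∫ t in (0:ℝ)..L, (g t - g s) / (l t - l s) * deriv l t := by
  unfold Top
  apply intervalIntegral.integral_congr_ae
  filter_upwards [h.ae_ne s] with t ht _
  rw [Phi, if_neg ht]

theorem Top_ii (h : Crv L l) {g : ℝ → ℂ} (hg : SP L g) (s : ℝ) :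
    IntervalIntegrable (fun t => (g t - g s) / (l t - l s) * deriv l t) volume 0 L := by
  have : IntervalIntegrable (fun t => Phi l g s t * deriv l t) volume 0 L :=
    ((Phi_sp h hg s).cont.mul h.sp.deriv.cont).intervalIntegrable _ _
  refine this.congr_ae ?_
  apply ae_restrict_of_ae
  filter_upwards [h.ae_ne s] with t ht
  rw [Phi, if_neg ht]

/-- the space of smooth periodic functions -/
def V (L : ℝ) : Submodule ℂ (ℝ → ℂ) where
  carrier := {f | SP L f}
  add_mem' := fun {a b} ha hb => ⟨ha.sm.add hb.sm, ha.per.add hb.per⟩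
  zero_mem' := ⟨contDiff_const, fun _ => rfl⟩
  smul_mem' := fun c f hf => ⟨contDiff_const.smul hf.sm, fun x => by simp [hf.per x]⟩

theorem vsp (f : V L) : SP L f := f.2

/-- conjugation -/
noncomputable def cj (f : V L) : V L := ⟨fun t => (starRingEnd ℂ) ((f : ℝ → ℂ) t), (vsp f).conj⟩

theorem cj_apply (f : V L) (t : ℝ) : (cj f : ℝ → ℂ) t = (starRingEnd ℂ) ((f : ℝ → ℂ) t) := rfl

theorem Top_add (h : Crv L l) {f g : ℝ → ℂ} (hf : SP L f) (hg : SP L g) (s : ℝ) :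
    Top L l (f + g) s = Top L l f s + Top L l g s := by
  simp only [Top_eq h]
  rw [← intervalIntegral.integral_add (Top_ii h hf s) (Top_ii h hg s)]
  congr 1; funext t; simp only [Pi.add_apply]; ring

theorem Top_smul (h : Crv L l) (c : ℂ) (f : ℝ → ℂ) (s : ℝ) :
    Top L l (c • f) s = c * Top L l f s := by
  simp only [Top_eq h]
  rw [← intervalIntegral.integral_const_mul]
  congr 1; funext t; simp only [Pi.smul_apply, smul_eq_mul]; ring

/-- `Top` as a linear map -/
noncomputable def Tm (h : Crv L l) : Module.End ℂ (V L) where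
  toFun f := ⟨Top L l f, Top_sp h (vsp f)⟩
  map_add' f g := by ext s; exact Top_add h (vsp f) (vsp g) s
  map_smul' c f := by ext s; exact Top_smul h c f s

/-- the conjugate operator -/
noncomputable def Tbm (h : Crv L l) : Module.End ℂ (V L) where
  toFun f := cj (Tm h (cj f))
  map_add' f g := by
    have : cj (f + g) = cj f + cj g := by ext s; simp [cj_apply]
    rw [this, map_add]; ext s; simp [cj_apply]
  map_smul' c f := by
    have : cj (c • f) = (starRingEnd ℂ c) • cj f := by ext s; simp [cj_apply]
    rw [this, map_smul]; ext s; simp [cj_apply]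

theorem cj_cj (f : V L) : cj (cj f) = f := by ext s; simp [cj_apply]

theorem Tm_apply (h : Crv L l) (f : V L) (s : ℝ) : (Tm h f : ℝ → ℂ) s = Top L l f s := rfl

theorem Tbm_apply (h : Crv L l) (f : V L) : Tbm h f = cj (Tm h (cj f)) := rfl

theorem Tm_sq (h : Crv L l) (ho : Ori L l) : Tm h * Tm h = (-2 * π * Complex.I) • Tm h := by
  ext f s
  exact Top_Top h ho (vsp f) s

theorem Tbm_sq (h : Crv L l) (ho : Ori L l) : Tbm h * Tbm h = (2 * π * Complex.I) • Tbm h := by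
  have key := Tm_sq h ho
  ext f s
  have e : (Tm h * Tm h) (cj f) = ((-2 * π * Complex.I) • Tm h) (cj f) := by rw [key]
  rw [Module.End.mul_apply, Tbm_apply, Tbm_apply, cj_cj]
  rw [Module.End.mul_apply] at e
  rw [e]
  have h2 : (starRingEnd ℂ) 2 = 2 := map_ofNat _ 2
  simp [cj_apply, Tbm_apply, h2]

/-- adjoint double layer operator -/
noncomputable def Am (h : Crv L l) : Module.End ℂ (V L) :=
  (π : ℂ) • 1 + (2 * Complex.I)⁻¹ • (Tm h - Tbm h)

/-- the real part operator -/
noncomputable def Bm (h : Crv L l) : Module.End ℂ (V L) :=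
  (2 : ℂ)⁻¹ • (Tm h + Tbm h)

theorem alg_aux1 {R : Type} [Ring R] [Algebra ℂ R] (T S : R) (p : ℂ)
    (h1 : T * T = (-2 * p * Complex.I) • T) (h2 : S * S = (2 * p * Complex.I) • S) :
    ((2 : ℂ)⁻¹ • (T + S)) * ((2 : ℂ)⁻¹ • (T + S)) =
      (p • (1 : R) + (2 * Complex.I)⁻¹ • (T - S)) * (p • (1 : R) + (2 * Complex.I)⁻¹ • (T - S)) - (p ^ 2) • 1 := by
  simp only [mul_add, add_mul, mul_sub, sub_mul, smul_mul_assoc, mul_smul_comm, smul_smul, smul_add, smul_sub,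
    one_mul, mul_one, h1, h2, mul_inv, Complex.inv_I]
  match_scalars <;> ring_nf <;> simp <;> ring

theorem alg_aux2 {R : Type} [Ring R] [Algebra ℂ R] (T S : R) (p : ℂ)
    (h1 : T * T = (-2 * p * Complex.I) • T) (h2 : S * S = (2 * p * Complex.I) • S) :
    ((2 : ℂ)⁻¹ • (T + S)) * (p • (1 : R) + (2 * Complex.I)⁻¹ • (T - S)) =
      -((p • (1 : R) + (2 * Complex.I)⁻¹ • (T - S)) * ((2 : ℂ)⁻¹ • (T + S))) := by
  simp only [mul_add, add_mul, mul_sub, sub_mul, smul_mul_assoc, mul_smul_comm, smul_smul, smul_add, smul_sub,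
    one_mul, mul_one, h1, h2, mul_inv, Complex.inv_I]
  match_scalars <;> ring_nf <;> simp

theorem Bm_sq (h : Crv L l) (ho : Ori L l) : Bm h * Bm h = Am h * Am h - ((π : ℂ) ^ 2) • 1 :=
  alg_aux1 (Tm h) (Tbm h) π (Tm_sq h ho) (Tbm_sq h ho)

theorem Bm_Am (h : Crv L l) (ho : Ori L l) : Bm h * Am h = - (Am h * Bm h) :=
  alg_aux2 (Tm h) (Tbm h) π (Tm_sq h ho) (Tbm_sq h ho)

theorem Tbm_eq (h : Crv L l) (g : V L) (s : ℝ) : (Tbm h g : ℝ → ℂ) s =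
    ∫ t in (0:ℝ)..L, ((g : ℝ → ℂ) t - (g : ℝ → ℂ) s) * (starRingEnd ℂ) (deriv l t / (l t - l s)) := by
  rw [Tbm_apply, cj_apply, Tm_apply, Top_eq h, show ∀ f : ℝ → ℂ, (starRingEnd ℂ) (∫ t in (0:ℝ)..L, f t) =
    ∫ t in (0:ℝ)..L, (starRingEnd ℂ) (f t) from fun f => by
      simp only [intervalIntegral, map_sub, integral_conj]]
  congr 1; funext t
  simp only [cj_apply, map_mul, map_div₀, map_sub, Complex.conj_conj]; ring

theorem Tbm_ii (h : Crv L l) (g : V L) (s : ℝ) : IntervalIntegrable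
    (fun t => ((g : ℝ → ℂ) t - (g : ℝ → ℂ) s) * (starRingEnd ℂ) (deriv l t / (l t - l s))) volume 0 L := by
  have : IntervalIntegrable (fun t => (starRingEnd ℂ) (Phi l (cj g) s t * deriv l t)) volume 0 L :=
    (Complex.continuous_conj.comp ((Phi_sp h (vsp (cj g)) s).cont.mul h.sp.deriv.cont)).intervalIntegrable _ _
  refine this.congr_ae ?_
  apply ae_restrict_of_ae
  filter_upwards [h.ae_ne s] with t ht
  rw [Phi, if_neg ht]
  simp only [cj_apply, map_mul, map_div₀, map_sub, Complex.conj_conj]; ring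

theorem Am_apply (h : Crv L l) (ho : Ori L l) (g : V L) (s : ℝ) :
    (Am h g : ℝ → ℂ) s = ∫ t in (0:ℝ)..L, (Ks l s t : ℂ) * (g : ℝ → ℂ) t := by
  have hk : Continuous (fun t => Ks l s t) := (Ks_cont h).comp (by fun_prop : Continuous fun t : ℝ => (s, t))
  have hg := (vsp g).cont
  have e1 : (Tm h g : ℝ → ℂ) s - (Tbm h g : ℝ → ℂ) s =
      ∫ t in (0:ℝ)..L, 2 * Complex.I * ((Ks l s t : ℂ) * (g : ℝ → ℂ) t - (g : ℝ → ℂ) s * (Ks l s t : ℂ)) := by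
    rw [Tm_apply, Top_eq h, Tbm_eq h, ← intervalIntegral.integral_sub (Top_ii h (vsp g) s) (Tbm_ii h g s)]
    apply intervalIntegral.integral_congr_ae
    filter_upwards [h.ae_ne s] with t ht _
    rw [Ks_of_ne h ht]
    have : (deriv l t / (l t - l s)) - (starRingEnd ℂ) (deriv l t / (l t - l s)) =
        2 * Complex.I * ((deriv l t / (l t - l s)).im : ℂ) := by
      rw [Complex.sub_conj]; push_cast; ring
    linear_combination ((g : ℝ → ℂ) t - (g : ℝ → ℂ) s) * this
  rw [intervalIntegral.integral_const_mul, intervalIntegral.integral_sub (Continuous.intervalIntegrable (by fun_prop) _ _)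
    (Continuous.intervalIntegrable (by fun_prop) _ _), intervalIntegral.integral_const_mul,
    intervalIntegral.integral_ofReal, ho s] at e1
  have e2 : (Am h g : ℝ → ℂ) s = π * (g : ℝ → ℂ) s + (2 * Complex.I)⁻¹ * ((Tm h g : ℝ → ℂ) s - (Tbm h g : ℝ → ℂ) s) := by
    simp [Am]
  rw [e2, e1]
  have : (2 * Complex.I) ≠ 0 := by simp
  field_simp
  ring

theorem Bm_apply (h : Crv L l) (g : V L) (s : ℝ) :
    (Bm h g : ℝ → ℂ) s = ∫ t in (0:ℝ)..L, ((g : ℝ → ℂ) t - (g : ℝ → ℂ) s) * (((deriv l t / (l t - l s)).re : ℝ) : ℂ) := by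
  have e2 : (Bm h g : ℝ → ℂ) s = 2⁻¹ * ((Tm h g : ℝ → ℂ) s + (Tbm h g : ℝ → ℂ) s) := by
    simp [Bm]; ring
  rw [e2, Tm_apply, Top_eq h, Tbm_eq h, ← intervalIntegral.integral_add (Top_ii h (vsp g) s) (Tbm_ii h g s),
    ← intervalIntegral.integral_const_mul]
  congr 1; funext t
  have : (deriv l t / (l t - l s)) + (starRingEnd ℂ) (deriv l t / (l t - l s)) =
        2 * ((deriv l t / (l t - l s)).re : ℂ) := by
      rw [Complex.add_conj]; push_cast; ring
  linear_combination 2⁻¹ * ((g : ℝ → ℂ) t - (g : ℝ → ℂ) s) * this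

theorem by_parts {f g : ℝ → ℂ} (hf : SP L f) (hg : SP L g) :
    ∫ t in (0:ℝ)..L, f t * deriv g t = - ∫ t in (0:ℝ)..L, deriv f t * g t := by
  rw [intervalIntegral.integral_mul_deriv_eq_deriv_mul (u := f) (u' := deriv f) (v := g) (v' := deriv g)
    (fun x _ => (hf.diff x).hasDerivAt) (fun x _ => (hg.diff x).hasDerivAt)
    (hf.deriv.cont.intervalIntegrable _ _) (hg.deriv.cont.intervalIntegrable _ _)]
  have e1 := hf.per 0
  have e2 := hg.per 0
  rw [zero_add] at e1 e2
  rw [e1, e2]; ring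

theorem Am_symm (h : Crv L l) (ho : Ori L l) (g k : V L) :
    ∫ s in (0:ℝ)..L, (Am h g : ℝ → ℂ) s * deriv k s = ∫ s in (0:ℝ)..L, (Am h k : ℝ → ℂ) s * deriv g s := by
  have hk := Ks_cont h
  have hS : Continuous (fun p : ℝ × ℝ => deriv (fun x => Ks l x p.2) p.1) := (contDiff_deriv1 (Ks_contDiff h)).continuous
  have key : ∀ g k : V L, ∫ s in (0:ℝ)..L, (Am h g : ℝ → ℂ) s * deriv k s =
      - DI L (fun t s => (g : ℝ → ℂ) t * (k : ℝ → ℂ) s * (deriv (fun x => Ks l x t) s : ℝ)) := by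
    intro g k
    have hgc := (vsp g).cont
    have hkc := (vsp k).cont
    have hkc' := (vsp k).deriv.cont
    have e1 : ∫ s in (0:ℝ)..L, (Am h g : ℝ → ℂ) s * deriv k s =
        DI L (fun s t => (Ks l s t : ℂ) * (g : ℝ → ℂ) t * deriv k s) := by
      unfold DI
      congr 1; funext s
      rw [Am_apply h ho, intervalIntegral.integral_mul_const]
    rw [e1, DI_swap (by fun_prop), ← neg_one_mul, ← DI_const_mul]
    unfold DI
    congr 1; funext t
    have hKs : SP L (fun s => (Ks l s t : ℂ)) :=
      ⟨Complex.ofRealCLM.contDiff.comp (contDiff_left (Ks_contDiff h) t), fun s => by simp [Ks_per_left h s t]⟩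
    have hd : ∀ s, deriv (fun s => (Ks l s t : ℂ)) s = ((deriv (fun x => Ks l x t) s : ℝ) : ℂ) := by
      intro s
      have : DifferentiableAt ℝ (fun x => Ks l x t) s :=
        (contDiff_left (Ks_contDiff h) t).differentiable (by simp) s
      exact this.hasDerivAt.ofReal_comp.deriv
    have := by_parts hKs (vsp k)
    simp only [hd] at this
    have q1 : ∫ s in (0:ℝ)..L, (Ks l s t : ℂ) * (g : ℝ → ℂ) t * deriv k s =
        (g : ℝ → ℂ) t * ∫ s in (0:ℝ)..L, (Ks l s t : ℂ) * deriv k s := by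
      rw [← intervalIntegral.integral_const_mul]; congr 1; funext s; ring
    rw [q1, this, ← intervalIntegral.integral_neg, ← intervalIntegral.integral_const_mul]
    congr 1; funext s; ring
  rw [key, key]
  congr 1
  have hgc := (vsp g).cont
  have hkc := (vsp k).cont
  have hS' : Continuous (fun p : ℝ × ℝ => deriv (fun x => Ks l x p.1) p.2) :=
    (contDiff_swap (F := fun s t => deriv (fun x => Ks l x t) s) (contDiff_deriv1 (Ks_contDiff h))).continuous
  rw [DI_swap (F := fun t s => (g : ℝ → ℂ) t * (k : ℝ → ℂ) s * (deriv (fun x => Ks l x t) s : ℝ)) (by fun_prop)]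
  apply DI_congr h
  intro s t hst
  rw [Ks_deriv1_symm h hst]; ring

end FC


namespace FC
open scoped ContDiff Topology
variable {L : ℝ} {l : ℝ → ℂ}

/-- bilinear energy -/
noncomputable def En (h : Crv L l) (g k : V L) : ℂ := ∫ s in (0:ℝ)..L, (Bm h g : ℝ → ℂ) s * deriv k s

/-- regularized bilinear energy -/
noncomputable def Dn (L : ℝ) (l : ℝ → ℂ) (ε : ℝ) (g k : ℝ → ℂ) : ℂ :=
  -(1/2) * DI L (fun s t => (Real.log (rho l s t + ε) : ℂ) * deriv g t * deriv k s)

theorem log_cont (h : Crv L l) {ε : ℝ} (hε : 0 < ε) :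
    Continuous (fun p : ℝ × ℝ => Real.log (rho l p.1 p.2 + ε)) := by
  have := rho_cont h
  apply Continuous.log (by fun_prop)
  intro p; have := rho_nonneg (l := l) p.1 p.2; positivity

theorem parts_eps (h : Crv L l) (g : V L) (s : ℝ) {ε : ℝ} (hε : 0 < ε) :
    ∫ t in (0:ℝ)..L, ((g : ℝ → ℂ) t - (g : ℝ → ℂ) s) *
      (((deriv l t * (starRingEnd ℂ) (l t - l s)).re / (rho l s t + ε) : ℝ) : ℂ) =
    -(1/2) * ∫ t in (0:ℝ)..L, (Real.log (rho l s t + ε) : ℂ) * deriv g t := by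
  have hg := vsp g
  have hlc := h.sm.continuous
  have hlc' := h.sp.deriv.cont
  have hr : Continuous (fun t => rho l s t) := (rho_cont h).comp (by fun_prop : Continuous fun t : ℝ => (s, t))
  have hne : ∀ t, rho l s t + ε ≠ 0 := fun t => by have := rho_nonneg (l := l) s t; positivity
  have hc : Continuous (fun t => (deriv l t * (starRingEnd ℂ) (l t - l s)).re / (rho l s t + ε)) :=
    Continuous.div (by fun_prop) (by fun_prop) hne
  rw [intervalIntegral.integral_mul_deriv_eq_deriv_mul (u := fun t => (g : ℝ → ℂ) t - (g : ℝ → ℂ) s) (u' := deriv g)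
    (v := fun t => (((1/2) * Real.log (rho l s t + ε) : ℝ) : ℂ))
    (v' := fun t => (((deriv l t * (starRingEnd ℂ) (l t - l s)).re / (rho l s t + ε) : ℝ) : ℂ))
    (fun x _ => (hg.diff x).hasDerivAt.sub_const _) (fun x _ => (rho_log_deriv h s x hε).ofReal_comp)
    (hg.deriv.cont.intervalIntegrable _ _) ((Complex.continuous_ofReal.comp hc).intervalIntegrable _ _)]
  have e1 := hg.per 0
  have e2 := rho_per h s 0
  rw [zero_add] at e1 e2
  rw [e1, e2, sub_self, zero_sub, ← intervalIntegral.integral_const_mul, ← intervalIntegral.integral_neg]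
  congr 1; funext t; push_cast; ring

theorem Dn_tendsto (h : Crv L l) (g k : V L) :
    Filter.Tendsto (fun ε => Dn L l ε g k) (𝓝[>] 0) (𝓝 (En h g k)) := by
  have hk := (vsp k).deriv.cont
  have hlc := h.sm.continuous
  have hlc' := h.sp.deriv.cont
  have c1 := Phi_cont h (vsp g)
  have c2 := Phi_cont h (vsp (cj g))
  set F : ℝ → ℝ → ℂ := fun s t => 2⁻¹ * (Phi l g s t * deriv l t + (starRingEnd ℂ) (Phi l (cj g) s t * deriv l t))
    * deriv k s with hF
  have hFc : Continuous (fun p : ℝ × ℝ => F p.1 p.2) := by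
    simp only [hF]
    fun_prop
  have hFe : ∀ s t, l t ≠ l s → F s t = ((g : ℝ → ℂ) t - (g : ℝ → ℂ) s) * (((deriv l t / (l t - l s)).re : ℝ) : ℂ)
      * deriv k s := by
    intro s t ht
    simp only [hF, Phi, if_neg ht, cj_apply]
    have : (deriv l t / (l t - l s)) + (starRingEnd ℂ) (deriv l t / (l t - l s)) =
        2 * ((deriv l t / (l t - l s)).re : ℂ) := by
      rw [Complex.add_conj]; push_cast; ring
    rw [show (((deriv l t / (l t - l s)).re : ℝ) : ℂ) = 2⁻¹ * ((deriv l t / (l t - l s)) + (starRingEnd ℂ) (deriv l t / (l t - l s))) by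
      rw [this]; ring]
    simp only [map_mul, map_div₀, map_sub, Complex.conj_conj]
    ring
  have hE : En h g k = DI L F := by
    rw [DI_congr h hFe]
    unfold En DI
    congr 1; funext s
    rw [Bm_apply h, intervalIntegral.integral_mul_const]
  rw [hE]
  refine (reg_tendsto h hFc).congr' ?_
  have hpos : ∀ᶠ ε : ℝ in 𝓝[>] 0, 0 < ε := eventually_mem_nhdsWithin
  filter_upwards [hpos] with ε hε
  have e1 : DI L (fun s t => F s t * ((rho l s t / (rho l s t + ε) : ℝ) : ℂ)) =
      DI L (fun s t => ((g : ℝ → ℂ) t - (g : ℝ → ℂ) s) *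
      (((deriv l t * (starRingEnd ℂ) (l t - l s)).re / (rho l s t + ε) : ℝ) : ℂ) * deriv k s) := by
    apply DI_congr h
    intro s t ht
    rw [hFe s t ht]
    have : (deriv l t * (starRingEnd ℂ) (l t - l s)).re = (deriv l t / (l t - l s)).re * rho l s t := by
      have := Complex.normSq_pos.2 (sub_ne_zero.2 ht)
      rw [rho, Complex.div_re]
      set w := l t - l s
      rw [add_mul, div_mul_cancel₀ _ this.ne', div_mul_cancel₀ _ this.ne']
      simp
    rw [this]; push_cast; ring
  rw [e1]
  unfold Dn
  rw [← DI_const_mul]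
  unfold DI
  congr 1; funext s
  rw [intervalIntegral.integral_mul_const, parts_eps h g s hε, mul_assoc, ← intervalIntegral.integral_mul_const,
    ← intervalIntegral.integral_const_mul]

theorem En_symm (h : Crv L l) (g k : V L) : En h g k = En h k g := by
  refine tendsto_nhds_unique (Dn_tendsto h g k) ((Dn_tendsto h k g).congr' ?_)
  have hpos : ∀ᶠ ε : ℝ in 𝓝[>] 0, 0 < ε := eventually_mem_nhdsWithin
  filter_upwards [hpos] with ε hε
  have := log_cont h hε
  have hk := (vsp k).deriv.cont
  have hg := (vsp g).deriv.cont
  unfold Dn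
  rw [DI_swap (by fun_prop)]
  congr 2; funext s t
  rw [rho_symm]; ring

/-- weight -/
noncomputable def al (l : ℝ → ℂ) (t : ℝ) : ℝ := 1 + Complex.normSq (l t)

theorem al_pos (t : ℝ) : 0 < al l t := by have := Complex.normSq_nonneg (l t); unfold al; positivity

/-- features -/
noncomputable def Xf (l : ℝ → ℂ) (i : Fin 3) (t : ℝ) : ℝ :=
  (![Complex.normSq (l t), √2 * (l t).re, √2 * (l t).im] i) / al l t

noncomputable def Xe (l : ℝ → ℂ) (ε : ℝ) (i : Fin 4) (t : ℝ) : ℝ :=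
  Fin.cons (α := fun _ => ℝ) (√(1 - ε) / al l t) (fun j => Xf l j t) i

theorem al_cont (h : Crv L l) : Continuous (al l) := by
  have := h.sm.continuous
  unfold al; fun_prop

theorem Xf_cont (h : Crv L l) (i : Fin 3) : Continuous (Xf l i) := by
  have := h.sm.continuous
  unfold Xf
  apply Continuous.div _ (al_cont h) (fun t => (al_pos t).ne')
  fin_cases i <;> simp <;> fun_prop

theorem Xe_cont (h : Crv L l) (ε : ℝ) (i : Fin 4) : Continuous (Xe l ε i) := by
  unfold Xe
  refine Fin.cases ?_ (fun j => ?_) i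
  · simp only [Fin.cons_zero]
    exact continuous_const.div (al_cont h) (fun t => (al_pos t).ne')
  · simp only [Fin.cons_succ]; exact Xf_cont h j

/-- normalized kernel -/
noncomputable def Kn (l : ℝ → ℂ) (ε : ℝ) (s t : ℝ) : ℝ := ∑ i, Xe l ε i s * Xe l ε i t

theorem Kn_eq {ε : ℝ} (hε1 : ε ≤ 1) (s t : ℝ) :
    1 - Kn l ε s t = (rho l s t + ε) / (al l s * al l t) := by
  have h1 := (al_pos (l := l) s).ne'
  have h2 := (al_pos (l := l) t).ne'
  have h3 : √(1 - ε) * √(1 - ε) = 1 - ε := Real.mul_self_sqrt (by linarith)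
  have h4 : √(2:ℝ) * √2 = 2 := Real.mul_self_sqrt (by norm_num)
  have e : Kn l ε s t * (al l s * al l t) = √(1 - ε) * √(1 - ε) + Complex.normSq (l s) * Complex.normSq (l t) +
      (√(2:ℝ) * √2) * ((l s).re * (l t).re) + (√(2:ℝ) * √2) * ((l s).im * (l t).im) := by
    unfold Kn Xe Xf
    rw [Fin.sum_univ_succ]
    simp only [Fin.cons_zero, Fin.cons_succ, Fin.sum_univ_three]
    simp only [Matrix.cons_val]
    field_simp
    ring
  rw [eq_div_iff (mul_ne_zero h1 h2), sub_mul, e, h3, h4]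
  unfold rho al
  simp only [Complex.normSq_apply, Complex.sub_re, Complex.sub_im]
  ring

theorem Kn_abs {ε : ℝ} (hε : 0 < ε) (hε1 : ε ≤ 1) (s t : ℝ) : |Kn l ε s t| < 1 := by
  have h1 := (al_pos (l := l) s)
  have h2 := (al_pos (l := l) t)
  have h0 := rho_nonneg (l := l) s t
  have e := Kn_eq (l := l) hε1 s t
  rw [abs_lt]
  constructor
  · have : (1 - Kn l ε s t) < 2 := by
      rw [e, div_lt_iff₀ (by positivity)]
      unfold rho al
      simp only [Complex.normSq_apply, Complex.sub_re, Complex.sub_im]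
      nlinarith [sq_nonneg ((l s).re + (l t).re), sq_nonneg ((l s).im + (l t).im), mul_nonneg (add_nonneg (mul_self_nonneg (l s).re) (mul_self_nonneg (l s).im)) (add_nonneg (mul_self_nonneg (l t).re) (mul_self_nonneg (l t).im)),
        mul_self_nonneg (l s).re, mul_self_nonneg (l s).im, mul_self_nonneg (l t).re, mul_self_nonneg (l t).im]
    linarith
  · have : 0 < 1 - Kn l ε s t := by rw [e]; positivity
    linarith

theorem Kn_cont (h : Crv L l) (ε : ℝ) : Continuous (fun p : ℝ × ℝ => Kn l ε p.1 p.2) := by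
  unfold Kn
  apply continuous_finsetSum
  intro i _
  have := Xe_cont h ε i
  fun_prop

theorem int_deriv_zero (g : V L) : ∫ t in (0:ℝ)..L, deriv (g : ℝ → ℂ) t = 0 := by
  have hg := vsp g
  rw [intervalIntegral.integral_deriv_eq_sub (fun x _ => hg.diff x) (hg.deriv.cont.intervalIntegrable _ _)]
  have := hg.per 0
  rw [zero_add] at this; rw [this, sub_self]

/-- moments -/
noncomputable def mom (L : ℝ) (l : ℝ → ℂ) (ε : ℝ) (g : ℝ → ℂ) {n : ℕ} (w : Fin n → Fin 4) : ℂ :=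
  ∫ t in (0:ℝ)..L, ((∏ j, Xe l ε (w j) t : ℝ) : ℂ) * deriv g t

theorem DI_add {F G : ℝ → ℝ → ℂ} (hF : Continuous (fun p : ℝ × ℝ => F p.1 p.2))
    (hG : Continuous (fun p : ℝ × ℝ => G p.1 p.2)) :
    DI L (fun s t => F s t + G s t) = DI L F + DI L G := by
  unfold DI
  rw [← intervalIntegral.integral_add ((inner_cont hF).intervalIntegrable _ _)
    ((inner_cont hG).intervalIntegrable _ _)]
  congr 1; funext s
  rw [intervalIntegral.integral_add ((cont_r hF s).intervalIntegrable _ _) ((cont_r hG s).intervalIntegrable _ _)]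

theorem DI_sum {ι : Type} (S : Finset ι) {F : ι → ℝ → ℝ → ℂ} (hF : ∀ i, Continuous (fun p : ℝ × ℝ => F i p.1 p.2)) :
    DI L (fun s t => ∑ i ∈ S, F i s t) = ∑ i ∈ S, DI L (F i) := by
  classical
  induction S using Finset.induction_on with
  | empty => simp [DI]
  | insert a S ha ih =>
    simp only [Finset.sum_insert ha]
    rw [DI_add (hF a) (continuous_finsetSum _ fun i _ => hF i), ih]

theorem DI_prod (a b : ℝ → ℂ) : DI L (fun s t => a s * b t) = (∫ s in (0:ℝ)..L, a s) * ∫ t in (0:ℝ)..L, b t := by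
  unfold DI
  simp only [intervalIntegral.integral_const_mul, intervalIntegral.integral_mul_const]

theorem int_conj (f : ℝ → ℂ) : ∫ t in (0:ℝ)..L, (starRingEnd ℂ) (f t) = (starRingEnd ℂ) (∫ t in (0:ℝ)..L, f t) := by
  simp only [intervalIntegral, map_sub, integral_conj]

theorem Kn_pow_DI (h : Crv L l) (ε : ℝ) (g : V L) (n : ℕ) :
    DI L (fun s t => ((Kn l ε s t ^ n : ℝ) : ℂ) * deriv g t * deriv (cj g) s) =
      ((∑ w : Fin n → Fin 4, ‖mom L l ε g w‖ ^ 2 : ℝ) : ℂ) := by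
  have hg := (vsp g).deriv.cont
  have hgc := (vsp (cj g)).deriv.cont
  have hX := Xe_cont h ε
  have e : ∀ s t, ((Kn l ε s t ^ n : ℝ) : ℂ) * deriv g t * deriv (cj g) s =
      ∑ w : Fin n → Fin 4, (((∏ j, Xe l ε (w j) s : ℝ) : ℂ) * deriv (cj g) s) * (((∏ j, Xe l ε (w j) t : ℝ) : ℂ) * deriv g t) := by
    intro s t
    rw [Kn, Fintype.sum_pow]
    rw [Complex.ofReal_sum, Finset.sum_mul, Finset.sum_mul]
    apply Finset.sum_congr rfl
    intro w _
    rw [Finset.prod_mul_distrib]; push_cast; ring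
  simp only [e]
  rw [DI_sum Finset.univ (F := fun (w : Fin n → Fin 4) s t => (((∏ j, Xe l ε (w j) s : ℝ) : ℂ) * deriv (cj g) s) * (((∏ j, Xe l ε (w j) t : ℝ) : ℂ) * deriv g t))
    (fun w => by fun_prop), Complex.ofReal_sum]
  apply Finset.sum_congr rfl
  intro w _
  rw [DI_prod]
  have : ∫ s in (0:ℝ)..L, ((∏ j, Xe l ε (w j) s : ℝ) : ℂ) * deriv (cj g) s = (starRingEnd ℂ) (mom L l ε g w) := by
    unfold mom
    rw [← int_conj]
    congr 1; funext s
    rw [map_mul, Complex.conj_ofReal]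
    congr 1
    exact deriv_conj (vsp g).diff s
  rw [this, mul_comm]
  change mom L l ε g w * _ = _
  rw [Complex.mul_conj, Complex.normSq_eq_norm_sq]

end FC


namespace FC
open scoped ContDiff Topology
variable {L : ℝ} {l : ℝ → ℂ}

theorem Kn_bound (h : Crv L l) {ε : ℝ} (hε : 0 < ε) (hε1 : ε ≤ 1) :
    ∃ q, 0 ≤ q ∧ q < 1 ∧ ∀ s ∈ Set.Icc 0 L, ∀ t ∈ Set.Icc 0 L, |Kn l ε s t| ≤ q := by
  have hc : Continuous (fun p : ℝ × ℝ => |Kn l ε p.1 p.2|) := (Kn_cont h ε).abs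
  obtain ⟨p, _, hp⟩ := ((isCompact_Icc (a := (0:ℝ)) (b := L)).prod (isCompact_Icc (a := (0:ℝ)) (b := L))).exists_isMaxOn
    ⟨(0, 0), by simp [h.pos.le]⟩ hc.continuousOn
  refine ⟨|Kn l ε p.1 p.2|, abs_nonneg _, Kn_abs hε hε1 _ _, fun s hs t ht => ?_⟩
  exact hp (a := (s, t)) ⟨hs, ht⟩

theorem Dn_eq (h : Crv L l) {ε : ℝ} (hε : 0 < ε) (hε1 : ε ≤ 1) (g : V L) :
    Dn L l ε g (cj g) = (1/2) * DI L (fun s t => ((-Real.log (1 - Kn l ε s t) : ℝ) : ℂ) * deriv g t * deriv (cj g) s) := by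
  have hg := (vsp g).deriv.cont
  have hgc := (vsp (cj g)).deriv.cont
  have hal := al_cont h
  obtain ⟨la, hla, hlal⟩ : ∃ la : ℝ → ℝ, (∀ t, Real.log (al l t) = la t) ∧ Continuous la :=
    ⟨fun t => Real.log (al l t), fun t => rfl, hal.log (fun t => (al_pos t).ne')⟩
  obtain ⟨lk, hlk, hlkc⟩ : ∃ lk : ℝ → ℝ → ℝ, (∀ s t, -Real.log (1 - Kn l ε s t) = lk s t) ∧
      Continuous (fun p : ℝ × ℝ => lk p.1 p.2) := by
    refine ⟨fun s t => -Real.log (1 - Kn l ε s t), fun s t => rfl, ?_⟩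
    have hK := Kn_cont h ε
    apply Continuous.neg
    apply Continuous.log (by fun_prop)
    intro p
    have := (abs_lt.1 (Kn_abs (l := l) hε hε1 p.1 p.2)).2
    linarith
  have e : ∀ s t, (Real.log (rho l s t + ε) : ℂ) * deriv g t * deriv (cj g) s =
      ((la s : ℂ) * deriv (cj g) s) * deriv g t + deriv (cj g) s * ((la t : ℂ) * deriv g t) -
      (lk s t : ℂ) * deriv g t * deriv (cj g) s := by
    intro s t
    have h1 := (al_pos (l := l) s)
    have h2 := (al_pos (l := l) t)
    have h0 := rho_nonneg (l := l) s t
    have : Real.log (1 - Kn l ε s t) = Real.log (rho l s t + ε) - (Real.log (al l s) + Real.log (al l t)) := by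
      rw [Kn_eq hε1, Real.log_div (by positivity) (by positivity), Real.log_mul h1.ne' h2.ne']
    rw [← hlk, this, hla, hla]; push_cast; ring
  unfold Dn
  simp only [e, hlk]
  rw [DI_sub (F := fun s t => ((la s : ℂ) * deriv (cj g) s) * deriv g t + deriv (cj g) s * ((la t : ℂ) * deriv g t))
    (by fun_prop) (by fun_prop),
    DI_add (F := fun s t => ((la s : ℂ) * deriv (cj g) s) * deriv g t) (by fun_prop) (by fun_prop),
    DI_prod, DI_prod (deriv (cj g)), int_deriv_zero, int_deriv_zero]
  ring

theorem Dn_lim (h : Crv L l) {ε : ℝ} (hε : 0 < ε) (hε1 : ε ≤ 1) (g : V L) :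
    Filter.Tendsto (fun N : ℕ => (((1/2) * ∑ n ∈ Finset.range N, (1 / ((n:ℝ) + 1)) *
      ∑ w : Fin (n+1) → Fin 4, ‖mom L l ε g w‖ ^ 2 : ℝ) : ℂ)) Filter.atTop (𝓝 (Dn L l ε g (cj g))) := by
  have hg := (vsp g).deriv.cont
  have hgc := (vsp (cj g)).deriv.cont
  have hK := Kn_cont h ε
  obtain ⟨q, q0, q1, hq⟩ := Kn_bound h hε hε1
  obtain ⟨C, hC⟩ := bound_DI (L := L) (F := fun s t => deriv (g : ℝ → ℂ) t * deriv (cj g : ℝ → ℂ) s) (by fun_prop)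
  have hlim : Filter.Tendsto (fun N : ℕ => DI L (fun s t => ((∑ n ∈ Finset.range N, Kn l ε s t ^ (n+1) / ((n:ℝ) + 1) : ℝ) : ℂ)
      * deriv g t * deriv (cj g) s)) Filter.atTop
      (𝓝 (DI L (fun s t => ((-Real.log (1 - Kn l ε s t) : ℝ) : ℂ) * deriv g t * deriv (cj g) s))) := by
    apply tendsto_DI h ((-Real.log (1 - q)) * C)
    · refine Filter.Eventually.of_forall fun N => ?_
      fun_prop
    · refine Filter.Eventually.of_forall fun N s hs t ht => ?_
      have b1 : ‖((∑ n ∈ Finset.range N, Kn l ε s t ^ (n+1) / ((n:ℝ) + 1) : ℝ) : ℂ)‖ ≤ -Real.log (1 - q) := by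
        rw [Complex.norm_real]
        refine (norm_sum_le _ _).trans ?_
        have hs2 := Real.hasSum_pow_div_log_of_abs_lt_one (x := q) (by rwa [abs_of_nonneg q0])
        refine le_trans ?_ (sum_le_hasSum (Finset.range N) (fun i _ => by positivity) hs2)
        apply Finset.sum_le_sum
        intro n _
        rw [Real.norm_eq_abs, abs_div, abs_pow, abs_of_nonneg (by positivity : (0:ℝ) ≤ (n:ℝ) + 1)]
        have := hq s hs t ht
        gcongr
      rw [mul_assoc, norm_mul]
      have b2 := hC s hs t ht
      exact mul_le_mul b1 b2 (norm_nonneg _) ((norm_nonneg _).trans b1)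
    · intro s t _
      have := (Real.hasSum_pow_div_log_of_abs_lt_one (Kn_abs (l := l) hε hε1 s t)).tendsto_sum_nat
      have := (Complex.continuous_ofReal.tendsto _).comp this
      exact (this.mul_const _).mul_const _
  rw [Dn_eq h hε hε1]
  refine (hlim.const_mul (1/2)).congr fun N => ?_
  rw [Complex.ofReal_mul, Complex.ofReal_sum]
  have : ((1/2 : ℝ) : ℂ) = 1/2 := by push_cast; rfl
  rw [this]
  congr 1
  have e : ∀ s t, ((∑ n ∈ Finset.range N, Kn l ε s t ^ (n+1) / ((n:ℝ) + 1) : ℝ) : ℂ) * deriv g t * deriv (cj g) s =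
      ∑ n ∈ Finset.range N, ((1 / ((n:ℝ) + 1) : ℝ) : ℂ) * (((Kn l ε s t ^ (n+1) : ℝ) : ℂ) * deriv g t * deriv (cj g) s) := by
    intro s t
    rw [Complex.ofReal_sum, Finset.sum_mul, Finset.sum_mul]
    apply Finset.sum_congr rfl
    intro n _
    push_cast; ring
  simp only [e]
  rw [DI_sum (Finset.range N) (F := fun n s t => ((1 / ((n:ℝ) + 1) : ℝ) : ℂ) * (((Kn l ε s t ^ (n+1) : ℝ) : ℂ) * deriv g t * deriv (cj g) s))
    (fun n => by fun_prop)]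
  apply Finset.sum_congr rfl
  intro n _
  rw [DI_const_mul, Kn_pow_DI h, Complex.ofReal_mul]

/-- moments independent of the regularization -/
noncomputable def mom0 (L : ℝ) (l : ℝ → ℂ) (g : ℝ → ℂ) {n : ℕ} (w : Fin n → Fin 3) : ℂ :=
  ∫ t in (0:ℝ)..L, ((∏ j, Xf l (w j) t : ℝ) : ℂ) * deriv g t

theorem mom_succ (ε : ℝ) (g : ℝ → ℂ) {n : ℕ} (w : Fin n → Fin 3) :
    mom L l ε g (fun j => (w j).succ) = mom0 L l g w := by
  unfold mom mom0 Xe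
  simp only [Fin.cons_succ]

theorem Dn_ge (h : Crv L l) {ε : ℝ} (hε : 0 < ε) (hε1 : ε ≤ 1) (g : V L) :
    (Dn L l ε g (cj g)).im = 0 ∧ 0 ≤ (Dn L l ε g (cj g)).re ∧ ∀ n (w : Fin (n+1) → Fin 3),
      (1/2) * ((1 / ((n:ℝ) + 1)) * ‖mom0 L l g w‖ ^ 2) ≤ (Dn L l ε g (cj g)).re := by
  have hl := Dn_lim h hε hε1 g
  have hi := (Complex.continuous_im.tendsto _).comp hl
  have hr := (Complex.continuous_re.tendsto _).comp hl
  refine ⟨?_, ?_, ?_⟩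
  · refine tendsto_nhds_unique hi ?_
    refine tendsto_const_nhds.congr fun N => ?_
    simp only [Function.comp, Complex.ofReal_im]
  · refine ge_of_tendsto' hr fun N => ?_
    simp only [Function.comp, Complex.ofReal_re]
    positivity
  · intro n w
    refine ge_of_tendsto hr ?_
    filter_upwards [Filter.eventually_gt_atTop n] with N hN
    simp only [Function.comp, Complex.ofReal_re]
    gcongr
    rw [← mom_succ ε g w]
    have h1 : ‖mom L l ε g (fun j => (w j).succ)‖ ^ 2 ≤ ∑ w : Fin (n+1) → Fin 4, ‖mom L l ε g w‖ ^ 2 :=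
      Finset.single_le_sum (f := fun w : Fin (n+1) → Fin 4 => ‖mom L l ε g w‖ ^ 2) (fun i _ => by positivity)
        (Finset.mem_univ (fun j => (w j).succ))
    refine le_trans ?_ (Finset.single_le_sum (f := fun n : ℕ => (1 / ((n:ℝ) + 1)) *
      ∑ w : Fin (n+1) → Fin 4, ‖mom L l ε g w‖ ^ 2) (fun i _ => by positivity) (Finset.mem_range.2 hN))
    gcongr

theorem En_ge (h : Crv L l) (g : V L) :
    (En h g (cj g)).im = 0 ∧ 0 ≤ (En h g (cj g)).re ∧ ∀ n (w : Fin (n+1) → Fin 3),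
      (1/2) * ((1 / ((n:ℝ) + 1)) * ‖mom0 L l g w‖ ^ 2) ≤ (En h g (cj g)).re := by
  have hl := Dn_tendsto h g (cj g)
  have hi := (Complex.continuous_im.tendsto _).comp hl
  have hr := (Complex.continuous_re.tendsto _).comp hl
  have hev : ∀ᶠ ε : ℝ in 𝓝[>] 0, 0 < ε ∧ ε ≤ 1 := by
    filter_upwards [Ioo_mem_nhdsGT (one_pos (α := ℝ))] with ε hε using ⟨hε.1, hε.2.le⟩
  refine ⟨?_, ?_, ?_⟩
  · refine tendsto_nhds_unique hi ?_
    refine tendsto_const_nhds.congr' ?_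
    filter_upwards [hev] with ε hε
    exact (Dn_ge h hε.1 hε.2 g).1.symm
  · refine ge_of_tendsto hr ?_
    filter_upwards [hev] with ε hε
    exact (Dn_ge h hε.1 hε.2 g).2.1
  · intro n w
    refine ge_of_tendsto hr ?_
    filter_upwards [hev] with ε hε
    exact (Dn_ge h hε.1 hε.2 g).2.2 n w

theorem zero_of_int (hL : 0 < L) {f : ℝ → ℂ} (hf : Continuous f) (hp : Function.Periodic f L)
    (h0 : ∫ t in (0:ℝ)..L, (starRingEnd ℂ) (f t) * f t = 0) : f = 0 := by
  have h1 : ∫ t in (0:ℝ)..L, Complex.normSq (f t) = 0 := by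
    have : ∫ t in (0:ℝ)..L, ((Complex.normSq (f t) : ℝ) : ℂ) = 0 := by
      rw [← h0]; congr 1; funext t; rw [mul_comm, Complex.mul_conj]
    rw [intervalIntegral.integral_ofReal] at this
    exact_mod_cast this
  funext x
  obtain ⟨y, hy, e⟩ := hp.exists_mem_Ico₀ hL x
  rw [e]
  by_contra hne
  have : 0 < ∫ t in (0:ℝ)..L, Complex.normSq (f t) := by
    apply intervalIntegral.integral_pos hL (by fun_prop) (fun x _ => Complex.normSq_nonneg _)
    exact ⟨y, ⟨hy.1, hy.2.le⟩, Complex.normSq_pos.2 hne⟩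
  linarith

/-- density: vanishing moments force a function to vanish -/
theorem moments_zero (h : Crv L l) {f : ℝ → ℂ} (hf : Continuous f) (hp : Function.Periodic f L)
    (hm : ∀ n (w : Fin n → Fin 3), ∫ t in (0:ℝ)..L, ((∏ j, Xf l (w j) t : ℝ) : ℂ) * f t = 0) : f = 0 := by
  have hL := h.pos
  have : Fact (0 < L) := ⟨hL⟩
  have hXp : ∀ i, Function.Periodic (Xf l i) L := fun i t => by simp [Xf, al, h.per t]
  have lift_cont : ∀ {u : ℝ → ℝ} (hu : Continuous u) (hup : Function.Periodic u L), Continuous hup.lift := by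
    intro u hu hup
    exact continuous_coinduced_dom.2 hu
  let u : Fin 3 → C(AddCircle L, ℝ) := fun i => ⟨(hXp i).lift, lift_cont (Xf_cont h i) (hXp i)⟩
  have hu : ∀ i (t : ℝ), u i (t : AddCircle L) = Xf l i t := fun i t => (hXp i).lift_coe t
  have hcoe : Continuous (fun t : ℝ => (t : AddCircle L)) := AddCircle.continuous_mk' L
  obtain ⟨C, hC⟩ := (isCompact_Icc (a := (0:ℝ)) (b := L)).exists_bound_of_continuousOn hf.continuousOn
  have hIntg : ∀ φ : C(AddCircle L, ℝ), IntervalIntegrable (fun t : ℝ => (φ (t : AddCircle L) : ℂ) * f t) volume 0 L := by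
    intro φ
    apply Continuous.intervalIntegrable
    have := φ.continuous.comp hcoe
    exact (Complex.continuous_ofReal.comp this).mul hf
  let Λ0 : C(AddCircle L, ℝ) →ₗ[ℝ] ℂ :=
    { toFun := fun φ => ∫ t in (0:ℝ)..L, (φ (t : AddCircle L) : ℂ) * f t
      map_add' := fun a b => by
        rw [← intervalIntegral.integral_add (hIntg a) (hIntg b)]
        congr 1; funext t; simp; ring
      map_smul' := fun c a => by
        simp only [RingHom.id_apply, Complex.real_smul]
        rw [← intervalIntegral.integral_const_mul]
        congr 1; funext t; simp; ring }
  let Λ : C(AddCircle L, ℝ) →L[ℝ] ℂ := Λ0.mkContinuous (C * L) (fun φ => by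
    have := intervalIntegral.norm_integral_le_of_norm_le_const (a := 0) (b := L) (C := ‖φ‖ * C)
      (f := fun t : ℝ => (φ (t : AddCircle L) : ℂ) * f t) (fun t ht => by
        rw [Set.uIoc_of_le hL.le] at ht
        rw [norm_mul, Complex.norm_real]
        exact mul_le_mul (φ.norm_coe_le_norm _) (hC t ⟨ht.1.le, ht.2⟩) (norm_nonneg _) (norm_nonneg _))
    rw [sub_zero, abs_of_pos hL] at this
    calc _ ≤ _ := this
      _ = _ := by ring)
  have hΛ : ∀ φ, Λ φ = ∫ t in (0:ℝ)..L, (φ (t : AddCircle L) : ℂ) * f t := fun φ => rfl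
  set A := Algebra.adjoin ℝ (Set.range u) with hA
  have hsep : A.SeparatesPoints := by
    intro x y hxy
    by_contra hcon
    push Not at hcon
    have hcon' : ∀ i, u i x = u i y := fun i => hcon (u i) ⟨u i, Algebra.subset_adjoin ⟨i, rfl⟩, rfl⟩
    apply hxy
    induction x using QuotientAddGroup.induction_on with | _ s => ?_
    induction y using QuotientAddGroup.induction_on with | _ t => ?_
    have c : ∀ i, Xf l i s = Xf l i t := fun i => by rw [← hu, ← hu]; exact hcon' i
    have a1 := al_pos (l := l) s
    have a2 := al_pos (l := l) t
    have c0 := c 0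
    have c1 := c 1
    have c2 := c 2
    simp only [Xf, Matrix.cons_val] at c0 c1 c2
    have ea : al l s = al l t := by
      rw [div_eq_div_iff a1.ne' a2.ne'] at c0
      unfold al at c0 ⊢; linarith
    rw [ea, div_left_inj' a2.ne'] at c1 c2
    have s2 : (√2 : ℝ) ≠ 0 := by positivity
    have d : l t = l s := Complex.ext (mul_left_cancel₀ s2 c1).symm (mul_left_cancel₀ s2 c2).symm
    obtain ⟨m, hm⟩ := (h.eq_iff s t).1 d
    change (s : AddCircle L) = (t : AddCircle L)
    rw [hm, AddCircle.coe_add]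
    have : ((m * L : ℝ) : AddCircle L) = 0 := by
      rw [AddCircle.coe_eq_zero_iff]; exact ⟨m, by simp⟩
    rw [this, add_zero]
  have htop := ContinuousMap.subalgebra_topologicalClosure_eq_top_of_separatesPoints A hsep
  have hker : ∀ φ ∈ A, Λ φ = 0 := by
    intro φ hφ
    have : φ ∈ Submodule.span ℝ (Submonoid.closure (Set.range u) : Set C(AddCircle L, ℝ)) := by
      rw [← Algebra.adjoin_eq_span]; exact hφ
    refine Submodule.span_induction (p := fun φ _ => Λ φ = 0) ?_ (map_zero Λ) (fun x y _ _ hx hy => by rw [map_add, hx, hy, add_zero])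
      (fun c x _ hx => by rw [map_smul, hx, smul_zero]) this
    intro ψ hψ
    have : ∃ n, ∃ w : Fin n → Fin 3, ψ = ∏ j, u (w j) := by
      refine Submonoid.closure_induction (motive := fun ψ _ => ∃ n, ∃ w : Fin n → Fin 3, ψ = ∏ j, u (w j)) ?_ ?_ ?_ hψ
      · rintro _ ⟨i, rfl⟩
        exact ⟨1, fun _ => i, by simp⟩
      · exact ⟨0, Fin.elim0, by simp⟩
      · rintro _ _ _ _ ⟨n, w, rfl⟩ ⟨n', w', rfl⟩
        refine ⟨n + n', Fin.append w w', ?_⟩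
        rw [Fin.prod_univ_add]; simp
    obtain ⟨n, w, rfl⟩ := this
    rw [hΛ, ← hm n w]
    congr 1; funext t
    congr 2
    rw [ContinuousMap.prod_apply]
    exact Finset.prod_congr rfl fun j _ => hu _ _
  have hall : ∀ φ, Λ φ = 0 := by
    intro φ
    have hcl : IsClosed {φ | Λ φ = 0} := isClosed_eq Λ.continuous continuous_const
    have hmem : φ ∈ A.topologicalClosure := by rw [htop]; trivial
    exact (hcl.closure_subset_iff (s := (A : Set C(AddCircle L, ℝ)))).2 hker hmem
  have cr : Continuous (fun t => (f t).re) := by fun_prop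
  have ci : Continuous (fun t => (f t).im) := by fun_prop
  have pr : Function.Periodic (fun t => (f t).re) L := fun t => by simp [hp t]
  have pi' : Function.Periodic (fun t => (f t).im) L := fun t => by simp [hp t]
  have er := hall ⟨pr.lift, lift_cont cr pr⟩
  have ei := hall ⟨pi'.lift, lift_cont ci pi'⟩
  rw [hΛ] at er ei
  have er' : ∫ t in (0:ℝ)..L, ((f t).re : ℂ) * f t = 0 := er
  have ei' : ∫ t in (0:ℝ)..L, ((f t).im : ℂ) * f t = 0 := ei
  apply zero_of_int hL hf hp
  have : ∀ t, (starRingEnd ℂ) (f t) * f t = ((f t).re : ℂ) * f t - Complex.I * (((f t).im : ℂ) * f t) := by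
    intro t
    have : (starRingEnd ℂ) (f t) = ((f t).re : ℂ) - Complex.I * ((f t).im : ℂ) := by
      apply Complex.ext <;> simp
    rw [this]; ring
  simp only [this]
  rw [intervalIntegral.integral_sub (Continuous.intervalIntegrable (by fun_prop) _ _)
    (Continuous.intervalIntegrable (by fun_prop) _ _), intervalIntegral.integral_const_mul, er', ei']
  simp

theorem En_zero (h : Crv L l) (g : V L) (h0 : En h g (cj g) = 0) : ∀ t, deriv (g : ℝ → ℂ) t = 0 := by
  have hg := vsp g
  have := moments_zero h hg.deriv.cont hg.deriv.per (fun n w => ?_)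
  · intro t; exact congrFun this t
  · cases n with
    | zero => simpa using int_deriv_zero g
    | succ n =>
      have h1 := (En_ge h g).2.2 n w
      rw [h0, Complex.zero_re] at h1
      have h2 : ‖mom0 L l g w‖ ^ 2 ≤ 0 := by
        by_contra hc
        push Not at hc
        have : 0 < (1/2) * ((1 / ((n:ℝ) + 1)) * ‖mom0 L l g w‖ ^ 2) := by positivity
        linarith
      have h3 : ‖mom0 L l g w‖ = 0 := by
        have := norm_nonneg (mom0 L l g w); nlinarith
      exact norm_eq_zero.1 h3

end FC


namespace FC
open scoped ContDiff Topology
variable {L : ℝ} {l : ℝ → ℂ}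

theorem hasDerivAt_weight (F : ℝ → ℝ → ℂ) (hF : ContDiff ℝ ∞ (fun p : ℝ × ℝ => F p.1 p.2))
    {w : ℝ → ℂ} (hw : Continuous w) (a b x : ℝ) :
    HasDerivAt (fun x => ∫ t in a..b, F x t * w t)
      (∫ t in a..b, deriv (fun y => F y t) x * w t) x := by
  have hc : Continuous (fun p : ℝ × ℝ => F p.1 p.2) := hF.continuous
  have hc' : Continuous (fun p : ℝ × ℝ => deriv (fun y => F y p.2) p.1) := (contDiff_deriv1 hF).continuous
  have hcw : Continuous (fun p : ℝ × ℝ => deriv (fun y => F y p.2) p.1 * w p.2) := by fun_prop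
  obtain ⟨C, hC⟩ := ((isCompact_closedBall x 1).prod (isCompact_uIcc (a := a) (b := b))).exists_bound_of_continuousOn
    hcw.continuousOn
  refine (intervalIntegral.hasDerivAt_integral_of_dominated_loc_of_deriv_le (s := Metric.closedBall x 1)
    (bound := fun _ => C) (F := fun x t => F x t * w t) (F' := fun y t => deriv (fun y => F y t) y * w t)
    (Metric.closedBall_mem_nhds x one_pos) ?_ ?_ ?_ ?_ ?_ ?_).2
  · refine Filter.Eventually.of_forall fun y => ?_
    have : Continuous (fun t => F y t) := hc.comp (by fun_prop : Continuous fun t : ℝ => (y, t))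
    exact (this.mul hw).aestronglyMeasurable
  · have : Continuous (fun t => F x t) := hc.comp (by fun_prop : Continuous fun t : ℝ => (x, t))
    exact (this.mul hw).intervalIntegrable _ _
  · exact (hcw.comp (by fun_prop : Continuous fun t : ℝ => (x, t))).aestronglyMeasurable
  · refine Filter.Eventually.of_forall fun t ht y hy => ?_
    exact hC (y, t) ⟨hy, Set.uIoc_subset_uIcc ht⟩
  · exact intervalIntegrable_const
  · refine Filter.Eventually.of_forall fun t ht y hy => ?_
    have : DifferentiableAt ℝ (fun x => F x t) y :=
      (contDiff_left hF t).differentiable (by simp) y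
    exact this.hasDerivAt.mul_const _

theorem contDiff_weight_nat {w : ℝ → ℂ} (hw : Continuous w) (a b : ℝ) (n : ℕ) :
    ∀ (F : ℝ → ℝ → ℂ) (_ : ContDiff ℝ ∞ (fun p : ℝ × ℝ => F p.1 p.2)),
    ContDiff ℝ n (fun x => ∫ t in a..b, F x t * w t) := by
  induction n with
  | zero =>
    intro F hF
    have : Continuous (fun x => ∫ t in a..b, F x t * w t) :=
      continuous_iff_continuousAt.2 fun x => (hasDerivAt_weight F hF hw a b x).continuousAt
    simpa using (contDiff_zero (𝕜 := ℝ)).2 this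
  | succ n ih =>
    intro F hF
    push_cast
    rw [contDiff_succ_iff_deriv]
    refine ⟨fun x => (hasDerivAt_weight F hF hw a b x).differentiableAt, by simp, ?_⟩
    have : deriv (fun x => ∫ t in a..b, F x t * w t) = fun x => ∫ t in a..b, deriv (fun y => F y t) x * w t :=
      funext fun x => (hasDerivAt_weight F hF hw a b x).deriv
    rw [this]
    exact ih (fun x t => deriv (fun y => F y t) x) (contDiff_deriv1 hF)

theorem contDiff_weight {w : ℝ → ℂ} (hw : Continuous w) (a b : ℝ)
    (F : ℝ → ℝ → ℂ) (hF : ContDiff ℝ ∞ (fun p : ℝ × ℝ => F p.1 p.2)) :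
    ContDiff ℝ ∞ (fun x => ∫ t in a..b, F x t * w t) :=
  contDiff_infty.2 fun n => contDiff_weight_nat hw a b n F hF

/-- constants -/
def cst (L : ℝ) (c : ℂ) : V L := ⟨fun _ => c, contDiff_const, fun _ => rfl⟩

theorem cst_apply (c : ℂ) (t : ℝ) : (cst L c : ℝ → ℂ) t = c := rfl

theorem eq_cst (g : V L) (hg : ∀ t, deriv (g : ℝ → ℂ) t = 0) : ∃ c, g = cst L c := by
  refine ⟨(g : ℝ → ℂ) 0, ?_⟩
  ext t
  exact is_const_of_deriv_eq_zero (vsp g).diff hg t 0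

theorem Bm_cst (h : Crv L l) (c : ℂ) : Bm h (cst L c) = 0 := by
  ext s
  rw [Bm_apply]
  simp [cst_apply]

theorem Am_cst (h : Crv L l) (ho : Ori L l) (c : ℂ) : Am h (cst L c) = (π : ℂ) • cst L c := by
  ext s
  rw [Am_apply h ho]
  simp only [cst_apply]
  rw [intervalIntegral.integral_mul_const, intervalIntegral.integral_ofReal, ho s]
  simp [cst_apply]

theorem cj_Am (h : Crv L l) (ho : Ori L l) (g : V L) : Am h (cj g) = cj (Am h g) := by
  ext s
  rw [cj_apply, Am_apply h ho, Am_apply h ho, ← int_conj]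
  congr 1; funext t
  simp [cj_apply]

theorem weak_zero (hL : 0 < L) (w : V L) (hw : ∀ k : V L, ∫ s in (0:ℝ)..L, (w : ℝ → ℂ) s * deriv k s = 0) :
    ∀ t, deriv (w : ℝ → ℂ) t = 0 := by
  have h1 := hw ⟨deriv (cj w : ℝ → ℂ), (vsp (cj w)).deriv⟩
  rw [by_parts (vsp w) (vsp (cj w)).deriv, neg_eq_zero] at h1
  have := zero_of_int hL (vsp w).deriv.cont (vsp w).deriv.per (by
    rw [← h1]; congr 1; funext t
    have : deriv (cj w : ℝ → ℂ) t = (starRingEnd ℂ) (deriv (w : ℝ → ℂ) t) := deriv_conj (vsp w).diff t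
    rw [this, mul_comm])
  intro t; exact congrFun this t

theorem eig (h : Crv L l) (ho : Ori L l) {f : ℝ → ℂ} (hf : Continuous f) (hp : Function.Periodic f L)
    {la : ℂ} (hla : 2 * π ≤ ‖la - π‖) (he : ∀ s, la * f s = ∫ t in (0:ℝ)..L, (Ks l t s : ℂ) * f t) : f = 0 := by
  have hL := h.pos
  have hK := Ks_cont h
  have pp := Real.pi_pos
  have la0 : la ≠ 0 := by
    rintro rfl
    rw [zero_sub, norm_neg, Complex.norm_real, Real.norm_of_nonneg pp.le] at hla
    linarith
  have lapi : la ≠ π := by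
    rintro rfl
    rw [sub_self, norm_zero] at hla; linarith
  have hsm : ContDiff ℝ ∞ f := by
    have e : f = fun s => la⁻¹ * ∫ t in (0:ℝ)..L, (Ks l t s : ℂ) * f t := by
      funext s; rw [← he, inv_mul_cancel_left₀ la0]
    rw [e]
    apply contDiff_const.mul
    apply contDiff_weight hf 0 L (fun s t => (Ks l t s : ℂ))
    exact Complex.ofRealCLM.contDiff.comp (contDiff_swap (Ks_contDiff h))
  -- the testing identity
  have test : ∀ k : V L, ∫ s in (0:ℝ)..L, (Am h k : ℝ → ℂ) s * f s = la * ∫ t in (0:ℝ)..L, (k : ℝ → ℂ) t * f t := by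
    intro k
    have hk := (vsp k).cont
    have e1 : ∫ s in (0:ℝ)..L, (Am h k : ℝ → ℂ) s * f s = DI L (fun s t => (Ks l s t : ℂ) * (k : ℝ → ℂ) t * f s) := by
      unfold DI
      congr 1; funext s
      rw [Am_apply h ho, intervalIntegral.integral_mul_const]
    rw [e1, DI_swap (F := fun s t => (Ks l s t : ℂ) * (k : ℝ → ℂ) t * f s) (by fun_prop)]
    unfold DI
    rw [← intervalIntegral.integral_const_mul]
    congr 1; funext t
    rw [show la * ((k : ℝ → ℂ) t * f t) = (k : ℝ → ℂ) t * (la * f t) by ring, he, ← intervalIntegral.integral_const_mul]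
    congr 1; funext s; ring
  have hIntg : ∫ t in (0:ℝ)..L, f t = 0 := by
    have := test (cst L 1)
    rw [Am_cst h ho] at this
    simp only [Submodule.coe_smul, Pi.smul_apply, cst_apply, smul_eq_mul, mul_one, one_mul,
      intervalIntegral.integral_const_mul] at this
    have : (la - π) * ∫ t in (0:ℝ)..L, f t = 0 := by rw [sub_mul, this, sub_self]
    exact (mul_eq_zero.1 this).resolve_left (sub_ne_zero.2 lapi)
  obtain ⟨g, hg⟩ : ∃ g : V L, deriv (g : ℝ → ℂ) = f := by
    have hd : ∀ s, HasDerivAt (fun s => ∫ t in (0:ℝ)..s, f t) (f s) s := fun s =>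
      intervalIntegral.integral_hasDerivAt_right (hf.intervalIntegrable _ _) (hf.stronglyMeasurableAtFilter _ _) hf.continuousAt
    have hd' : deriv (fun s => ∫ t in (0:ℝ)..s, f t) = f := funext fun s => (hd s).deriv
    refine ⟨⟨fun s => ∫ t in (0:ℝ)..s, f t, ?_, ?_⟩, hd'⟩
    · rw [contDiff_infty_iff_deriv, hd']
      exact ⟨fun s => (hd s).differentiableAt, hsm⟩
    · intro s
      simp only
      rw [← intervalIntegral.integral_add_adjacent_intervals (hf.intervalIntegrable 0 s) (hf.intervalIntegrable s (s+L)),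
        hp.intervalIntegral_add_eq s 0, zero_add, hIntg, add_zero]
  -- Am g = -la g + const
  obtain ⟨c, hc⟩ : ∃ c, Am h g + la • g = cst L c := by
    apply eq_cst
    apply weak_zero hL
    intro k
    have hk := vsp k
    have e : ∀ s, ((Am h g + la • g : V L) : ℝ → ℂ) s * deriv k s =
        (Am h g : ℝ → ℂ) s * deriv k s + la * ((g : ℝ → ℂ) s * deriv k s) := by
      intro s; simp; ring
    simp only [e]
    have c1 := (vsp (Am h g)).cont
    have c2 := (vsp g).cont
    have c3 := hk.deriv.cont
    rw [intervalIntegral.integral_add (Continuous.intervalIntegrable (by fun_prop) _ _)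
      (Continuous.intervalIntegrable (by fun_prop) _ _), Am_symm h ho, hg, test, ← hg,
      intervalIntegral.integral_const_mul, by_parts hk (vsp g)]
    rw [show (fun t => deriv (k : ℝ → ℂ) t * (g : ℝ → ℂ) t) = fun t => (g : ℝ → ℂ) t * deriv k t from
      funext fun t => mul_comm _ _]
    ring
  have hAg : Am h g = cst L c - la • g := eq_sub_of_add_eq hc
  set b := Bm h g with hb
  have hAb : Am h b = la • b := by
    have : Am h b = -(Bm h (Am h g)) := by
      have := LinearMap.congr_fun (Bm_Am h ho) g
      simp only [Module.End.mul_apply, LinearMap.neg_apply] at this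
      rw [this, neg_neg]
    rw [this, hAg, map_sub, Bm_cst, map_smul, zero_sub, neg_neg]
  have hBb : Bm h b = (la^2 - (π:ℂ)^2) • g + cst L ((π - la) * c) := by
    have := LinearMap.congr_fun (Bm_sq h ho) g
    simp only [Module.End.mul_apply, LinearMap.sub_apply, LinearMap.smul_apply, Module.End.one_apply] at this
    rw [hb, this, hAg, map_sub, map_smul, hAg, Am_cst h ho]
    ext s
    simp [cst_apply]; ring
  set e := En h g (cj g) with hedef
  have hb' := vsp b
  have hgs := vsp g
  have hEe : e = ∫ s in (0:ℝ)..L, (b : ℝ → ℂ) s * deriv (cj g) s := rfl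
  obtain ⟨e1, e2, _⟩ := En_ge h g
  have econj : (starRingEnd ℂ) e = e := Complex.conj_eq_iff_im.2 e1
  have cjd : ∀ (u : V L) t, deriv (cj u : ℝ → ℂ) t = (starRingEnd ℂ) (deriv (u : ℝ → ℂ) t) :=
    fun u t => deriv_conj (vsp u).diff t
  have hbg : ∫ s in (0:ℝ)..L, deriv (b : ℝ → ℂ) s * (cj g : ℝ → ℂ) s = -e := by
    rw [hEe, by_parts hb' (vsp (cj g)), neg_neg]
  have cdz : ∀ (d : ℂ) (u : V L), ∫ s in (0:ℝ)..L, d * deriv (u : ℝ → ℂ) s = 0 := fun d u => by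
    rw [intervalIntegral.integral_const_mul, int_deriv_zero, mul_zero]
  by_cases he0 : e = 0
  · have := En_zero h g he0
    rw [hg] at this
    exact funext this
  exfalso
  have hreal : (starRingEnd ℂ) la = la := by
    have h1 := Am_symm h ho b (cj g)
    have h2 : ∫ s in (0:ℝ)..L, (Am h b : ℝ → ℂ) s * deriv (cj g) s = la * e := by
      rw [hAb, hEe, ← intervalIntegral.integral_const_mul]
      congr 1; funext s; simp; ring
    have h3 : ∫ s in (0:ℝ)..L, (Am h (cj g) : ℝ → ℂ) s * deriv b s = (starRingEnd ℂ) la * e := by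
      rw [cj_Am h ho, hAg]
      have ee : ∀ s, (cj (cst L c - la • g) : ℝ → ℂ) s * deriv b s =
          (starRingEnd ℂ) c * deriv b s - (starRingEnd ℂ) la * (deriv (b : ℝ → ℂ) s * (cj g : ℝ → ℂ) s) := by
        intro s; simp [cj_apply, cst_apply]; ring
      simp only [ee]
      have c1 := hb'.deriv.cont
      have c2 := (vsp (cj g)).cont
      rw [intervalIntegral.integral_sub (Continuous.intervalIntegrable (by fun_prop) _ _)
        (Continuous.intervalIntegrable (by fun_prop) _ _), cdz, intervalIntegral.integral_const_mul, hbg]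
      ring
    rw [h2, h3] at h1
    exact (mul_right_cancel₀ he0 h1).symm
  have hEb : En h b (cj b) = ((π:ℂ)^2 - la^2) * e := by
    unfold En
    rw [hBb]
    have ee : ∀ s, (((la^2 - (π:ℂ)^2) • g + cst L ((π - la) * c) : V L) : ℝ → ℂ) s * deriv (cj b) s =
        (la^2 - (π:ℂ)^2) * ((g : ℝ → ℂ) s * deriv (cj b) s) + ((π - la) * c) * deriv (cj b) s := by
      intro s; simp [cst_apply]; ring
    simp only [ee]
    have c1 := (vsp (cj b)).deriv.cont
    have c2 := hgs.cont
    rw [intervalIntegral.integral_add (Continuous.intervalIntegrable (by fun_prop) _ _)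
        (Continuous.intervalIntegrable (by fun_prop) _ _), cdz, intervalIntegral.integral_const_mul]
    have : ∫ s in (0:ℝ)..L, (g : ℝ → ℂ) s * deriv (cj b) s = -e := by
      rw [← econj, ← map_neg, ← hbg, ← int_conj]
      congr 1; funext s
      rw [cjd, map_mul, cj_apply, Complex.conj_conj, mul_comm]
    rw [this]; ring
  obtain ⟨x, hx⟩ := Complex.conj_eq_iff_real.1 hreal
  obtain ⟨y, hy⟩ := Complex.conj_eq_iff_real.1 econj
  have hy0 : 0 ≤ y := by
    have : 0 ≤ e.re := e2
    rwa [hy, Complex.ofReal_re] at this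
  have hy1 : 0 < y := lt_of_le_of_ne hy0 (fun h => he0 (by rw [hy, ← h, Complex.ofReal_zero]))
  have hge := (En_ge h b).2.1
  have hEb' : En h b (cj b) = (((π^2 - x^2) * y : ℝ) : ℂ) := by rw [hEb, hx, hy]; push_cast; ring
  rw [hEb', Complex.ofReal_re] at hge
  have hx2 : x^2 ≤ π^2 := by
    by_contra hcon
    push Not at hcon
    have : (π^2 - x^2) * y < 0 := mul_neg_of_neg_of_pos (by linarith) hy1
    linarith
  have hx3 : x = -π := by
    have h1 := abs_le_of_sq_le_sq' hx2 pp.le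
    rw [hx, ← Complex.ofReal_sub, Complex.norm_real, Real.norm_eq_abs, abs_of_nonpos (by linarith [h1.2])] at hla
    linarith [h1.1]
  have hEb0 : En h b (cj b) = 0 := by rw [hEb', hx3]; simp
  have hbz := En_zero h b hEb0
  apply he0
  rw [← neg_eq_zero, ← hbg]
  simp [hbz]

end FC


namespace FC
open scoped ContDiff Topology
variable {L : ℝ} {l : ℝ → ℂ}

theorem riemann (hL : 0 < L) {φ : ℝ → ℂ} (hφ : Continuous φ) :
    Filter.Tendsto (fun N : ℕ => ((L / (N:ℝ) : ℝ) : ℂ) * ∑ i : Fin N, φ (((i : ℕ) : ℝ) * L / (N:ℝ))) Filter.atTop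
      (𝓝 (∫ t in (0:ℝ)..L, φ t)) := by
  rw [Metric.tendsto_atTop]
  intro ε hε
  have huc := (isCompact_Icc (a := (0:ℝ)) (b := L)).uniformContinuousOn_of_continuous hφ.continuousOn
  rw [Metric.uniformContinuousOn_iff] at huc
  obtain ⟨δ, hδ, hd⟩ := huc (ε / (2 * L)) (by positivity)
  obtain ⟨n0, hn0⟩ := exists_nat_gt (L / δ)
  refine ⟨n0 + 1, fun N hN => ?_⟩
  have hNpos : (0:ℝ) < N := by
    have : 0 < N := by omega
    exact_mod_cast this
  have hLN : L / N < δ := by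
    have : (n0:ℝ) ≤ N := by exact_mod_cast (by omega : n0 ≤ N)
    rw [div_lt_iff₀ hδ] at hn0
    rw [div_lt_iff₀ hNpos]
    nlinarith
  have e1 : ∫ t in (0:ℝ)..L, φ t = ∑ i ∈ Finset.range N, ∫ t in ((i:ℝ) * L / N)..(((i + 1 : ℕ):ℝ) * L / N), φ t := by
    rw [intervalIntegral.sum_integral_adjacent_intervals (a := fun i : ℕ => (i:ℝ) * L / N)
      (fun k _ => hφ.intervalIntegrable _ _)]
    congr 1
    · simp
    · field_simp
  rw [Fin.sum_univ_eq_sum_range (fun i => φ ((i:ℝ) * L / N)) N, e1, dist_eq_norm, Finset.mul_sum, ← Finset.sum_sub_distrib]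
  have key : ∀ i ∈ Finset.range N, ‖((L / (N:ℝ) : ℝ) : ℂ) * φ ((i:ℝ) * L / N) - ∫ t in ((i:ℝ) * L / N)..(((i + 1 : ℕ):ℝ) * L / N), φ t‖
      ≤ ε / (2 * L) * (L / N) := by
    intro i hi
    have hiN : (i:ℝ) + 1 ≤ N := by exact_mod_cast Finset.mem_range.1 hi
    have hlen : ((i + 1 : ℕ):ℝ) * L / N - (i:ℝ) * L / N = L / N := by push_cast; ring
    have hle : (i:ℝ) * L / N ≤ ((i + 1 : ℕ):ℝ) * L / N := by
      have : 0 < L / N := by positivity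
      linarith
    have e2 : ((L / (N:ℝ) : ℝ) : ℂ) * φ ((i:ℝ) * L / N) = ∫ t in ((i:ℝ) * L / N)..(((i + 1 : ℕ):ℝ) * L / N), φ ((i:ℝ) * L / N) := by
      rw [intervalIntegral.integral_const, hlen, Complex.real_smul]
    rw [e2, ← intervalIntegral.integral_sub (by simp) (hφ.intervalIntegrable _ _)]
    have := intervalIntegral.norm_integral_le_of_norm_le_const (a := (i:ℝ) * L / N) (b := ((i + 1 : ℕ):ℝ) * L / N)
      (f := fun t => φ ((i:ℝ) * L / N) - φ t) (C := ε / (2 * L)) (fun t ht => by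
        rw [Set.uIoc_of_le hle] at ht
        have a0 : 0 ≤ (i:ℝ) * L / N := by positivity
        have a1 : ((i + 1 : ℕ):ℝ) * L / N ≤ L := by
          rw [div_le_iff₀ hNpos]; push_cast; nlinarith
        rw [← dist_eq_norm]
        refine (hd _ ⟨a0, by linarith⟩ _ ⟨by linarith [ht.1], by linarith [ht.2]⟩ ?_).le
        rw [Real.dist_eq, abs_lt]; constructor <;> linarith [ht.1, ht.2])
    rwa [hlen, abs_of_pos (by positivity)] at this
  calc _ ≤ _ := norm_sum_le_of_le _ key
    _ = ε / 2 := by rw [Finset.sum_const, Finset.card_range, nsmul_eq_mul]; field_simp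
    _ < ε := by linarith

/-- mean square -/
noncomputable def qn {N : ℕ} (z : Fin N → ℂ) : ℝ := (N:ℝ)⁻¹ * ∑ i, ‖z i‖ ^ 2

theorem qn_nonneg {N : ℕ} (z : Fin N → ℂ) : 0 ≤ qn z := by unfold qn; positivity

theorem qn_smul {N : ℕ} (c : ℂ) (z : Fin N → ℂ) : qn (fun i => c * z i) = ‖c‖ ^ 2 * qn z := by
  unfold qn
  simp only [norm_mul, mul_pow]
  rw [← Finset.mul_sum]; ring

theorem qn_le {N : ℕ} (hN : 0 < N) {u v : Fin N → ℂ} {C : ℝ} (hu : ∀ i, ‖u i‖ ^ 2 ≤ C + 2 * ‖v i‖ ^ 2) :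
    qn u ≤ C + 2 * qn v := by
  have hN' : (0:ℝ) < N := by exact_mod_cast hN
  unfold qn
  calc (N:ℝ)⁻¹ * ∑ i, ‖u i‖ ^ 2 ≤ (N:ℝ)⁻¹ * ∑ i, (C + 2 * ‖v i‖ ^ 2) := by
        gcongr with i; exact hu i
    _ = _ := by
      rw [Finset.sum_add_distrib, ← Finset.mul_sum]; simp; field_simp

theorem avg_bound (hL : 0 < L) {N : ℕ} (hN : 0 < N) {c z : Fin N → ℂ} {C : ℝ} (hc : ∀ i, ‖c i‖ ≤ C) :
    ‖((L / (N:ℝ) : ℝ) : ℂ) * ∑ i, c i * z i‖ ≤ L * C * √(qn z) := by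
  have hN' : (0:ℝ) < N := by exact_mod_cast hN
  have C0 : 0 ≤ C := (norm_nonneg _).trans (hc ⟨0, hN⟩)
  have h1 : ‖∑ i, c i * z i‖ ≤ C * ∑ i, ‖z i‖ := by
    rw [Finset.mul_sum]
    refine norm_sum_le_of_le _ fun i _ => ?_
    rw [norm_mul]
    exact mul_le_mul_of_nonneg_right (hc i) (norm_nonneg _)
  have h2 : (∑ i, ‖z i‖) ≤ N * √(qn z) := by
    have := sq_sum_le_card_mul_sum_sq (s := (Finset.univ : Finset (Fin N))) (f := fun i => ‖z i‖)
    rw [Finset.card_univ, Fintype.card_fin] at this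
    rw [← abs_of_nonneg (by positivity : 0 ≤ (N:ℝ) * √(qn z))]
    refine le_trans (le_abs_self _) ?_
    apply sq_le_sq.1
    rw [mul_pow, Real.sq_sqrt (qn_nonneg z), qn]
    calc _ ≤ _ := this
      _ = _ := by field_simp
  rw [norm_mul, Complex.norm_real, Real.norm_of_nonneg (by positivity)]
  calc L / N * ‖∑ i, c i * z i‖ ≤ L / N * (C * (N * √(qn z))) := by
        gcongr
        exact h1.trans (by gcongr)
    _ = _ := by field_simp

theorem avg_bound1 (hL : 0 < L) {N : ℕ} (hN : 0 < N) {c : Fin N → ℂ} {C : ℝ} (hc : ∀ i, ‖c i‖ ≤ C) :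
    ‖((L / (N:ℝ) : ℝ) : ℂ) * ∑ i, c i‖ ≤ L * C := by
  have hN' : (0:ℝ) < N := by exact_mod_cast hN
  have h1 : ‖∑ i, c i‖ ≤ N * C := by
    calc _ ≤ ∑ i : Fin N, C := norm_sum_le_of_le _ fun i _ => hc i
      _ = _ := by simp
  rw [norm_mul, Complex.norm_real, Real.norm_of_nonneg (by positivity)]
  calc L / N * ‖∑ i, c i‖ ≤ L / N * (N * C) := by gcongr
    _ = _ := by field_simp

end FC


namespace FC
open scoped ContDiff Topology
variable {L : ℝ} {l : ℝ → ℂ}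

/-- residual of the discrete operator -/
noncomputable def res (L : ℝ) (l : ℝ → ℂ) {N : ℕ} (a b : Fin N → ℝ) (la : ℂ) (z : Fin N → ℂ) (i : Fin N) : ℂ :=
  ((L / (N:ℝ) : ℝ) : ℂ) * ∑ j, (Ks l (b j) (a i) : ℂ) * z j - la * z i

theorem res_smul {N : ℕ} (a b : Fin N → ℝ) (la c : ℂ) (z : Fin N → ℂ) :
    res L l a b la (fun i => c * z i) = fun i => c * res L l a b la z i := by
  funext i
  unfold res
  have : ∀ j, (Ks l (b j) (a i) : ℂ) * (c * z j) = c * ((Ks l (b j) (a i) : ℂ) * z j) := fun j => by ring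
  simp only [this]
  rw [← Finset.mul_sum]; ring

set_option maxHeartbeats 2000000 in
theorem lower (h : Crv L l) (ho : Ori L l) (ms mst : (N : ℕ) → Fin N → ℝ)
    (hms : ∀ ε > 0, ∃ N0, ∀ N ≥ N0, ∀ i : Fin N, |ms N i - ((i : ℕ) : ℝ) * L / (N : ℝ)| < ε)
    (hmst : ∀ ε > 0, ∃ N0, ∀ N ≥ N0, ∀ i : Fin N, |mst N i - ((i : ℕ) : ℝ) * L / (N : ℝ)| < ε) :
    ∃ c > 0, ∃ N1 : ℕ, ∀ N ≥ N1, ∀ la : ℂ, 2 * π ≤ ‖la - π‖ → ∀ z : Fin N → ℂ,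
      c * qn z ≤ qn (res L l (mst N) (ms N) la z) := by
  have hL := h.pos
  have hK := Ks_cont h
  have hKr : ∀ s, Continuous (fun t => Ks l s t) := fun s => hK.comp (by fun_prop : Continuous fun t : ℝ => (s, t))
  have hKl : ∀ s, Continuous (fun t => Ks l t s) := fun s => hK.comp (by fun_prop : Continuous fun t : ℝ => (t, s))
  by_contra hcon
  push Not at hcon
  obtain ⟨Na, hNa⟩ := hms 1 one_pos
  obtain ⟨Nb, hNb⟩ := hmst 1 one_pos
  have hseq : ∀ n : ℕ, ∃ N : ℕ, ∃ la : ℂ, ∃ z : Fin N → ℂ, n + 1 ≤ N ∧ Na ≤ N ∧ Nb ≤ N ∧ 2 * π ≤ ‖la - π‖ ∧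
      qn z = 1 ∧ qn (res L l (mst N) (ms N) la z) < 1 / ((n:ℝ) + 1) := by
    intro n
    obtain ⟨N, hN, la, hla, z, hz⟩ := hcon (1 / ((n:ℝ) + 1)) (by positivity) (max (n+1) (max Na Nb))
    simp only [ge_iff_le, max_le_iff] at hN
    have hq : 0 < qn z := by
      by_contra hq
      have : qn z = 0 := le_antisymm (not_lt.1 hq) (qn_nonneg z)
      rw [this, mul_zero] at hz
      exact absurd (qn_nonneg (res L l (mst N) (ms N) la z)) (not_le.2 hz)
    have hn : ‖(((√(qn z))⁻¹ : ℝ) : ℂ)‖ ^ 2 = (qn z)⁻¹ := by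
      rw [Complex.norm_real, Real.norm_of_nonneg (by positivity), inv_pow, Real.sq_sqrt hq.le]
    refine ⟨N, la, fun i => (((√(qn z))⁻¹ : ℝ) : ℂ) * z i, hN.1, hN.2.1, hN.2.2, hla, ?_, ?_⟩
    · rw [qn_smul, hn, inv_mul_cancel₀ hq.ne']
    · rw [res_smul, qn_smul, hn, inv_mul_lt_iff₀ hq, mul_comm]; exact hz
  choose N la z hn1 hn2 hn3 hla hz hr using hseq
  clear hcon
  have hNpos : ∀ n, 0 < N n := fun n => by have := hn1 n; omega
  set x : (n : ℕ) → Fin (N n) → ℝ := fun n i => ((i : ℕ) : ℝ) * L / (N n : ℝ) with hx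
  have hxI : ∀ n i, x n i ∈ Set.Icc 0 L := by
    intro n i
    have h0 : (0:ℝ) < N n := by exact_mod_cast hNpos n
    have h1 : ((i:ℕ):ℝ) ≤ N n := by exact_mod_cast i.2.le
    refine ⟨by simp only [hx]; positivity, ?_⟩
    simp only [hx]
    rw [div_le_iff₀ h0]; nlinarith
  set Bx : Set ℝ := Set.Icc (-1) (L + 1) with hBx
  have hIB : ∀ t ∈ Set.Icc 0 L, t ∈ Bx := fun t ht => ⟨by linarith [ht.1], by linarith [ht.2]⟩
  have hbB : ∀ n i, ms (N n) i ∈ Bx := by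
    intro n i
    have h1 := abs_lt.1 (hNa (N n) (hn2 n) i)
    have h2 := hxI n i
    simp only [hx] at h2
    exact ⟨by linarith [h2.1, h1.1], by linarith [h2.2, h1.2]⟩
  have haB : ∀ n i, mst (N n) i ∈ Bx := by
    intro n i
    have h1 := abs_lt.1 (hNb (N n) (hn3 n) i)
    have h2 := hxI n i
    simp only [hx] at h2
    exact ⟨by linarith [h2.1, h1.1], by linarith [h2.2, h1.2]⟩
  have hcB : IsCompact (Bx ×ˢ Bx) := isCompact_Icc.prod isCompact_Icc
  obtain ⟨D0, hD0⟩ := hcB.exists_bound_of_continuousOn hK.continuousOn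
  obtain ⟨D, hDp, hD⟩ : ∃ D : ℝ, 0 < D ∧ ∀ s ∈ Bx, ∀ t ∈ Bx, ‖(Ks l s t : ℂ)‖ ≤ D := by
    refine ⟨max D0 1, by positivity, fun s hs t ht => ?_⟩
    rw [Complex.norm_real]
    exact (hD0 (s, t) ⟨hs, ht⟩).trans (le_max_left _ _)
  have huc : ∀ η > 0, ∃ δ > 0, ∀ s ∈ Bx, ∀ s' ∈ Bx, ∀ t ∈ Bx, ∀ t' ∈ Bx, |s - s'| < δ → |t - t'| < δ →
      ‖(Ks l s t : ℂ) - (Ks l s' t' : ℂ)‖ < η := by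
    intro η hη
    have := hcB.uniformContinuousOn_of_continuous hK.continuousOn
    rw [Metric.uniformContinuousOn_iff] at this
    obtain ⟨δ, hδ, hd⟩ := this η hη
    refine ⟨δ, hδ, fun s hs s' hs' t ht t' ht' h1 h2 => ?_⟩
    rw [← Complex.ofReal_sub, Complex.norm_real, ← dist_eq_norm]
    refine hd (s, t) ⟨hs, ht⟩ (s', t') ⟨hs', ht'⟩ ?_
    rw [Prod.dist_eq]
    exact max_lt h1 h2
  set f : ℕ → ℝ → ℂ := fun n s => ((L / (N n:ℝ) : ℝ) : ℂ) * ∑ j, (Ks l (ms (N n) j) s : ℂ) * z n j with hf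
  set r : (n : ℕ) → Fin (N n) → ℂ := fun n => res L l (mst (N n)) (ms (N n)) (la n) (z n) with hrdef
  have hrz : ∀ n i, la n * z n i = f n (mst (N n) i) - r n i := by
    intro n i; simp only [hrdef, hf, res]; ring
  have fb : ∀ n, ∀ s ∈ Bx, ‖f n s‖ ≤ L * D := by
    intro n s hs
    have := avg_bound hL (hNpos n) (z := z n) (fun j => hD _ (hbB n j) s hs)
    rwa [hz, Real.sqrt_one, mul_one] at this
  have fd : ∀ n, ∀ s ∈ Bx, ∀ s' ∈ Bx, ∀ η, (∀ u ∈ Bx, ‖(Ks l u s : ℂ) - (Ks l u s' : ℂ)‖ ≤ η) → ‖f n s - f n s'‖ ≤ L * η := by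
    intro n s hs s' hs' η hη
    have := avg_bound hL (hNpos n) (z := z n) (fun j => hη _ (hbB n j))
    rw [hz, Real.sqrt_one, mul_one] at this
    convert this using 2
    simp only [hf]
    rw [← mul_sub, ← Finset.sum_sub_distrib]
    congr 1; apply Finset.sum_congr rfl; intro j _; ring
  have fc : ∀ n, Continuous (f n) := by
    intro n
    simp only [hf]
    refine continuous_const.mul (continuous_finsetSum _ fun j _ => ?_)
    exact (Complex.continuous_ofReal.comp (hKr _)).mul continuous_const
  -- bound on la
  have lab : ∀ n (E : ℝ), (∀ i, ‖f n (mst (N n) i)‖ ≤ E) → ‖la n‖ ^ 2 ≤ 2 * E ^ 2 + 2 * qn (r n) := by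
    intro n E hE
    have h1 : qn (fun i => la n * z n i) ≤ 2 * E ^ 2 + 2 * qn (r n) := by
      apply qn_le (hNpos n)
      intro i
      rw [hrz]
      have h2 : ‖f n (mst (N n) i) - r n i‖ ≤ E + ‖r n i‖ := (norm_sub_le _ _).trans (by gcongr; exact hE i)
      have h3 := norm_nonneg (f n (mst (N n) i) - r n i)
      nlinarith [sq_nonneg (E - ‖r n i‖)]
    rwa [qn_smul, hz, mul_one] at h1
  have rsmall : ∀ n, qn (r n) < 1 / ((n:ℝ) + 1) := hr
  have rle : ∀ n, qn (r n) ≤ 1 := fun n => (rsmall n).le.trans (by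
    rw [div_le_one (by positivity)]; linarith [(Nat.cast_nonneg n : (0:ℝ) ≤ n)])
  obtain ⟨R, hR⟩ : ∃ R : ℝ, ∀ n, ‖la n‖ ≤ R := by
    refine ⟨√(2 * (L * D) ^ 2 + 2), fun n => ?_⟩
    apply Real.le_sqrt_of_sq_le
    have := lab n (L * D) (fun i => fb n _ (haB n i))
    linarith [rle n]
  -- Arzela-Ascoli
  let F : ℕ → BoundedContinuousFunction (Set.Icc 0 L) ℂ := fun n =>
    BoundedContinuousFunction.mkOfCompact ⟨fun s => f n s, (fc n).comp continuous_subtype_val⟩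
  have hF : ∀ n s, F n s = f n s := fun n s => rfl
  have hcomp : IsCompact (closure (Set.range F)) := by
    apply BoundedContinuousFunction.arzela_ascoli (Metric.closedBall (0:ℂ) (L * D)) (isCompact_closedBall _ _)
    · rintro _ s ⟨n, rfl⟩
      rw [mem_closedBall_zero_iff, hF]
      exact fb n _ (hIB _ s.2)
    · intro s
      rw [Metric.equicontinuousAt_iff]
      intro ε hε
      obtain ⟨δ, hδ, hd⟩ := huc (ε / (2 * L)) (by positivity)
      refine ⟨δ, hδ, fun t ht => ?_⟩
      rintro ⟨_, n, rfl⟩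
      change dist (f n s) (f n t) < ε
      rw [dist_eq_norm]
      have hst : |(s:ℝ) - t| < δ := by rw [abs_sub_comm]; exact ht
      have := fd n s (hIB _ s.2) t (hIB _ t.2) (ε / (2 * L)) (fun u hu => (hd u hu u hu _ (hIB _ s.2) _ (hIB _ t.2) (by simpa using hδ) hst).le)
      have e : L * (ε / (2 * L)) = ε / 2 := by field_simp
      linarith
  obtain ⟨⟨G, lam⟩, -, ψ, hψ, hlim⟩ := (hcomp.prod (isCompact_closedBall (0:ℂ) R)).tendsto_subseq
    (x := fun n => (F n, la n)) (fun n => ⟨subset_closure ⟨n, rfl⟩, by simpa using hR n⟩)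
  have hlimF : Filter.Tendsto (fun n => F (ψ n)) Filter.atTop (𝓝 G) := (continuous_fst.tendsto _).comp hlim
  have hlimla : Filter.Tendsto (fun n => la (ψ n)) Filter.atTop (𝓝 lam) := (continuous_snd.tendsto _).comp hlim
  set g : ℝ → ℂ := Set.IccExtend hL.le G with hg
  have gc : Continuous g := G.continuous.Icc_extend' (h := hL.le)
  have gI : ∀ s (hs : s ∈ Set.Icc 0 L), g s = G ⟨s, hs⟩ := fun s hs => Set.IccExtend_of_mem hL.le _ hs
  have fg : ∀ n, ∀ s ∈ Set.Icc 0 L, ‖f n s - g s‖ ≤ dist (F n) G := by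
    intro n s hs
    rw [gI s hs, ← dist_eq_norm]
    exact BoundedContinuousFunction.dist_coe_le_dist (f := F n) (g := G) ⟨s, hs⟩
  have hlamn : 2 * π ≤ ‖lam - π‖ := by
    refine ge_of_tendsto' ((hlimla.sub_const (π:ℂ)).norm) fun n => hla _
  have hpsi : ∀ n, n ≤ ψ n := fun n => hψ.id_le n
  have evmesh : ∀ δ > 0, ∀ᶠ n in Filter.atTop, ∀ i, |ms (N (ψ n)) i - x (ψ n) i| < δ ∧ |mst (N (ψ n)) i - x (ψ n) i| < δ := by
    intro δ hδ
    obtain ⟨n1, h1⟩ := hms δ hδ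
    obtain ⟨n2, h2⟩ := hmst δ hδ
    filter_upwards [Filter.eventually_ge_atTop (max n1 n2)] with n hn i
    have a1 := hn1 (ψ n)
    have a2 := hpsi n
    have a3 := le_max_left n1 n2
    have a4 := le_max_right n1 n2
    exact ⟨h1 _ (by omega) i, h2 _ (by omega) i⟩
  have evr : ∀ η > 0, ∀ᶠ n in Filter.atTop, qn (r (ψ n)) < η := by
    intro η hη
    obtain ⟨n1, h1⟩ := exists_nat_gt (1 / η)
    filter_upwards [Filter.eventually_ge_atTop n1] with n hn
    refine (rsmall _).trans ?_
    have a2 : (n1:ℝ) ≤ ψ n := by exact_mod_cast hn.trans (hpsi n)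
    rw [div_lt_iff₀ hη] at h1
    rw [div_lt_iff₀ (by positivity)]
    nlinarith
  -- values at the collocation points
  have evf : ∀ η > 0, ∀ᶠ n in Filter.atTop, ∀ i, ‖f (ψ n) (mst (N (ψ n)) i) - g (x (ψ n) i)‖ ≤ (L + 1) * η := by
    intro η hη
    obtain ⟨δ, hδ, hd⟩ := huc η hη
    filter_upwards [evmesh δ hδ, Metric.tendsto_nhds.1 hlimF η hη] with n hn hn' i
    have a1 := fd (ψ n) _ (haB (ψ n) i) _ (hIB _ (hxI (ψ n) i)) η
      (fun u hu => (hd u hu u hu _ (haB (ψ n) i) _ (hIB _ (hxI (ψ n) i)) (by simpa using hδ) (hn i).2).le)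
    have a2 := fg (ψ n) _ (hxI (ψ n) i)
    calc _ = ‖(f (ψ n) (mst (N (ψ n)) i) - f (ψ n) (x (ψ n) i)) + (f (ψ n) (x (ψ n) i) - g (x (ψ n) i))‖ := by congr 1; ring
      _ ≤ L * η + dist (F (ψ n)) G := (norm_add_le _ _).trans (by gcongr)
      _ ≤ (L + 1) * η := by linarith
  -- limit equation on the interval
  have hNt : Filter.Tendsto (fun n => N (ψ n)) Filter.atTop Filter.atTop :=
    Filter.tendsto_atTop_mono (fun n => by have := hn1 (ψ n); have := hpsi n; simp only [id]; omega) Filter.tendsto_id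
  have heq : ∀ s ∈ Set.Icc 0 L, lam * g s = ∫ t in (0:ℝ)..L, (Ks l t s : ℂ) * g t := by
    intro s hs
    have hKs : Continuous (fun t => (Ks l t s : ℂ)) :=
      Complex.continuous_ofReal.comp (hKl s)
    have t1 := (riemann hL (hKs.mul gc)).comp hNt
    have t2 : Filter.Tendsto (fun n => la (ψ n) * f (ψ n) s) Filter.atTop (𝓝 (lam * g s)) := by
      apply hlimla.mul
      rw [Metric.tendsto_nhds]
      intro ε hε
      filter_upwards [Metric.tendsto_nhds.1 hlimF ε hε] with n hn
      rw [dist_eq_norm]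
      exact (fg _ s hs).trans_lt hn
    have t3 : Filter.Tendsto (fun n => la (ψ n) * f (ψ n) s -
        ((L / (N (ψ n):ℝ) : ℝ) : ℂ) * ∑ i, (Ks l (x (ψ n) i) s : ℂ) * g (x (ψ n) i)) Filter.atTop (𝓝 0) := by
      rw [Metric.tendsto_nhds]
      intro ε hε
      set Ct := L * D + L * (D * (L + 1)) + L * (L * D + (L+1) * 1) + 1 with hCt
      have hCtp : 0 < Ct := by positivity
      obtain ⟨η, hη0, hη1, hηC⟩ : ∃ η > 0, η ≤ 1 ∧ η * Ct < ε := by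
        refine ⟨min 1 (ε / (2 * Ct)), by positivity, min_le_left _ _, ?_⟩
        calc _ ≤ ε / (2 * Ct) * Ct := by gcongr; exact min_le_right _ _
          _ = ε / 2 := by field_simp
          _ < ε := by linarith
      obtain ⟨δ, hδ, hd⟩ := huc η hη0
      filter_upwards [evf η hη0, evmesh δ hδ, evr (η ^ 2) (by positivity)] with n h1 h2 h3
      rw [dist_zero_right]
      set m := ψ n
      have e1 : la m * f m s = ((L / (N m:ℝ) : ℝ) : ℂ) * ∑ j, (Ks l (ms (N m) j) s : ℂ) * f m (mst (N m) j)
          - ((L / (N m:ℝ) : ℝ) : ℂ) * ∑ j, (Ks l (ms (N m) j) s : ℂ) * r m j := by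
        rw [← mul_sub, ← Finset.sum_sub_distrib]
        simp only [hf]
        rw [mul_left_comm, Finset.mul_sum]
        congr 1; apply Finset.sum_congr rfl; intro j _
        have := hrz m j
        simp only [hf] at this
        rw [← mul_sub, ← this]; ring
      have e2 : la m * f m s - ((L / (N m:ℝ) : ℝ) : ℂ) * ∑ i, (Ks l (x m i) s : ℂ) * g (x m i) =
          ((L / (N m:ℝ) : ℝ) : ℂ) * ∑ j, ((Ks l (ms (N m) j) s : ℂ) * f m (mst (N m) j) - (Ks l (x m j) s : ℂ) * g (x m j))
          - ((L / (N m:ℝ) : ℝ) : ℂ) * ∑ j, (Ks l (ms (N m) j) s : ℂ) * r m j := by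
        rw [e1, Finset.sum_sub_distrib]; ring
      have b1 : ‖((L / (N m:ℝ) : ℝ) : ℂ) * ∑ j, (Ks l (ms (N m) j) s : ℂ) * r m j‖ ≤ L * D * η := by
        refine (avg_bound hL (hNpos m) (fun j => hD _ (hbB m j) s (hIB _ hs))).trans ?_
        gcongr
        exact Real.sqrt_le_iff.2 ⟨hη0.le, h3.le⟩
      have b2 : ‖((L / (N m:ℝ) : ℝ) : ℂ) * ∑ j, ((Ks l (ms (N m) j) s : ℂ) * f m (mst (N m) j) - (Ks l (x m j) s : ℂ) * g (x m j))‖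
          ≤ L * (D * ((L+1) * η) + η * (L * D + (L+1) * η)) := by
        apply avg_bound1 hL (hNpos m)
        intro j
        have c1 := h1 j
        have c2 := hd _ (hbB m j) _ (hIB _ (hxI m j)) s (hIB _ hs) s (hIB _ hs) (h2 j).1 (by simpa using hδ)
        have c3 := hD _ (hbB m j) s (hIB _ hs)
        have c4 := fb m _ (haB m j)
        have c5 : ‖g (x m j)‖ ≤ L * D + (L+1) * η := by
          calc _ = ‖f m (mst (N m) j) - (f m (mst (N m) j) - g (x m j))‖ := by congr 1; ring
            _ ≤ _ := (norm_sub_le _ _).trans (by gcongr)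
        calc _ = ‖(Ks l (ms (N m) j) s : ℂ) * (f m (mst (N m) j) - g (x m j)) +
            ((Ks l (ms (N m) j) s : ℂ) - (Ks l (x m j) s : ℂ)) * g (x m j)‖ := by congr 1; ring
          _ ≤ _ := by
            refine (norm_add_le _ _).trans ?_
            rw [norm_mul, norm_mul]
            gcongr
      rw [e2]
      refine ((norm_sub_le _ _).trans (add_le_add b2 b1)).trans_lt ?_
      refine lt_of_le_of_lt ?_ hηC
      have : L * (D * ((L+1) * η) + η * (L * D + (L+1) * η)) + L * D * η = η * (L * D + L * (D * (L + 1)) + L * (L * D + (L+1) * η)) := by ring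
      rw [this, hCt]
      apply mul_le_mul_of_nonneg_left _ hη0.le
      have : L * (L * D + (L+1) * η) ≤ L * (L * D + (L+1) * 1) := by gcongr
      linarith
    have t4 := t2.sub t3
    rw [sub_zero] at t4
    refine tendsto_nhds_unique t4 (t1.congr fun n => ?_)
    rw [sub_sub_cancel]; rfl
  -- conclude with the continuous problem
  have lam0 : lam ≠ 0 := by
    rintro rfl
    rw [zero_sub, norm_neg, Complex.norm_real, Real.norm_of_nonneg Real.pi_pos.le] at hlamn
    linarith [Real.pi_pos]
  set gt : ℝ → ℂ := fun s => lam⁻¹ * ∫ t in (0:ℝ)..L, (Ks l t s : ℂ) * g t with hgt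
  have gtI : ∀ s ∈ Set.Icc 0 L, gt s = g s := by
    intro s hs
    simp only [hgt]; rw [← heq s hs, inv_mul_cancel_left₀ lam0]
  have hgt0 : gt = 0 := by
    apply eig h ho _ _ hlamn
    · intro s
      simp only [hgt]
      rw [mul_inv_cancel_left₀ lam0]
      apply intervalIntegral.integral_congr
      intro t ht
      rw [Set.uIcc_of_le hL.le] at ht
      have := gtI t ht
      simp only [hgt] at this
      simp only [this]
    · simp only [hgt]
      apply continuous_const.mul
      apply intervalIntegral.continuous_parametric_intervalIntegral_of_continuous'
      fun_prop
    · intro s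
      simp only [hgt, Ks_per_right h]
  have g0 : ∀ s ∈ Set.Icc 0 L, g s = 0 := fun s hs => by rw [← gtI s hs, hgt0]; rfl
  obtain ⟨n, h1, h2⟩ := ((evf (1 / (4 * (L + 1))) (by positivity)).and (evr (1/4) (by norm_num))).exists
  have h3 := lab (ψ n) (1/4) (fun i => by
    have := h1 i
    rw [g0 _ (hxI _ _), sub_zero] at this
    have e : (L + 1) * (1 / (4 * (L + 1))) = 1/4 := by field_simp
    linarith)
  have h4 : π ≤ ‖la (ψ n)‖ := by
    have a1 := hla (ψ n)
    have a2 := norm_sub_le (la (ψ n)) (π : ℂ)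
    rw [Complex.norm_real, Real.norm_of_nonneg Real.pi_pos.le] at a2
    linarith
  have h5 := Real.pi_gt_three
  nlinarith

end FC


namespace FC
open scoped ContDiff Topology
variable {L : ℝ} {l : ℝ → ℂ}

theorem pow_bound {E : Type} [NormedAddCommGroup E] [NormedSpace ℂ E] [FiniteDimensional ℂ E]
    (a : E →L[ℂ] E) {c : ℝ} (hc : 0 < c) (hc1 : c ≤ 1)
    (H : ∀ μ : ℂ, 2 * π ≤ ‖μ‖ → ∀ z, c * ‖z‖ ≤ ‖a z - μ • z‖) (k : ℕ) :
    ‖a ^ k‖ ≤ (2 * (2 * π) / c) * (2 * π - c / 2) ^ k := by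
  have : CompleteSpace E := FiniteDimensional.complete ℂ E
  have hp := Real.pi_gt_three
  set ρ := 2 * π - c / 2 with hρ
  have hρ0 : 0 < ρ := by linarith
  have H2 : ∀ μ : ℂ, ρ ≤ ‖μ‖ → ∀ z, c / 2 * ‖z‖ ≤ ‖a z - μ • z‖ := by
    intro μ hμ z
    by_cases hbig : 2 * π ≤ ‖μ‖
    · have := H μ hbig z
      have := norm_nonneg z
      nlinarith
    push Not at hbig
    have hμ0 : 0 < ‖μ‖ := by linarith
    have hμ0' : (‖μ‖ : ℂ) ≠ 0 := by exact_mod_cast hμ0.ne'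
    set μ' : ℂ := ((2 * π / ‖μ‖ : ℝ) : ℂ) * μ with hμ'
    have n1 : ‖μ'‖ = 2 * π := by
      rw [hμ', norm_mul, Complex.norm_real, Real.norm_of_nonneg (by positivity)]
      field_simp
    have n2 : ‖μ' - μ‖ = 2 * π - ‖μ‖ := by
      have : μ' - μ = ((2 * π / ‖μ‖ - 1 : ℝ) : ℂ) * μ := by rw [hμ']; push_cast; ring
      have h1 : 0 ≤ 2 * π / ‖μ‖ - 1 := by
        rw [sub_nonneg, le_div_iff₀ hμ0]; linarith
      rw [this, norm_mul, Complex.norm_real, Real.norm_of_nonneg h1]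
      field_simp
    have h1 := H μ' n1.ge z
    have h2 : ‖a z - μ' • z‖ ≤ ‖a z - μ • z‖ + ‖(μ' - μ) • z‖ := by
      have : a z - μ' • z = (a z - μ • z) - (μ' - μ) • z := by rw [sub_smul]; abel
      rw [this]; exact norm_sub_le _ _
    rw [norm_smul, n2] at h2
    have := norm_nonneg z
    nlinarith
  have lowT : ∀ w : ℂ, w ≠ 0 → ‖w‖ ≤ ρ⁻¹ → ∀ z, ‖w‖ * (c / 2) * ‖z‖ ≤ ‖(1 - w • a) z‖ := by
    intro w hw hwn z
    have hw0 : 0 < ‖w‖ := norm_pos_iff.2 hw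
    have h1 := H2 w⁻¹ (by rw [norm_inv]; exact (le_inv_comm₀ hw0 hρ0).1 hwn) z
    have h2 : (1 - w • a) z = -(w • (a z - w⁻¹ • z)) := by
      rw [smul_sub, smul_smul, mul_inv_cancel₀ hw, one_smul]; simp
    rw [h2, norm_neg, norm_smul, mul_assoc]
    gcongr
  have hunit : ∀ w : ℂ, ‖w‖ ≤ ρ⁻¹ → IsUnit (1 - w • a) := by
    intro w hwn
    by_cases hw : w = 0
    · simp [hw]
    have hinj : Function.Injective (1 - w • a : E →L[ℂ] E) := by
      rw [injective_iff_map_eq_zero]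
      intro z hz
      have := lowT w hw hwn z
      rw [hz, norm_zero] at this
      have hw0 : 0 < ‖w‖ := norm_pos_iff.2 hw
      by_contra hz0
      have : 0 < ‖w‖ * (c / 2) * ‖z‖ := by have := norm_pos_iff.2 hz0; positivity
      linarith
    rw [ContinuousLinearMap.isUnit_iff_bijective]
    exact ⟨hinj, (LinearMap.injective_iff_surjective (f := ((1 - w • a : E →L[ℂ] E) : E →ₗ[ℂ] E))).1 hinj⟩
  have hsph : ∀ w ∈ Metric.sphere (0:ℂ) ρ⁻¹, ‖Ring.inverse (1 - w • a)‖ ≤ 2 * ρ / c := by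
    intro w hw
    rw [mem_sphere_zero_iff_norm] at hw
    have hw0 : w ≠ 0 := by
      rintro rfl
      rw [norm_zero] at hw
      have : 0 < ρ⁻¹ := by positivity
      linarith
    refine ContinuousLinearMap.opNorm_le_bound _ (by positivity) fun z => ?_
    have h1 := lowT w hw0 hw.le (Ring.inverse (1 - w • a) z)
    have h2 : (1 - w • a) (Ring.inverse (1 - w • a) z) = z := by
      have := Ring.mul_inverse_cancel _ (hunit w hw.le)
      exact congrArg (fun T : E →L[ℂ] E => T z) this
    rw [h2, hw] at h1
    calc _ = 2 * ρ / c * (ρ⁻¹ * (c / 2) * ‖Ring.inverse (1 - w • a) z‖) := by field_simp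
      _ ≤ _ := by gcongr
  have hdiff : DifferentiableOn ℂ (fun w : ℂ => Ring.inverse (1 - w • a)) (Metric.closedBall 0 ρ⁻¹) := by
    intro w hw
    apply DifferentiableAt.differentiableWithinAt
    apply DifferentiableAt.inverse
    · fun_prop
    · exact hunit w (by simpa using hw)
  have hdc : DiffContOnCl ℂ (fun w : ℂ => Ring.inverse (1 - w • a)) (Metric.ball 0 ρ⁻¹) := by
    refine ⟨hdiff.mono Metric.ball_subset_closedBall, hdiff.continuousOn.mono ?_⟩
    exact Metric.closure_ball_subset_closedBall
  have hcau := Complex.norm_iteratedDeriv_le_of_forall_mem_sphere_norm_le k (inv_pos.2 hρ0) hdc hsph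
  have hser := (spectrum.hasFPowerSeriesOnBall_inverse_one_sub_smul ℂ a).factorial_smul 1 k
  rw [← iteratedDeriv_eq_iteratedFDeriv] at hser
  rw [← hser] at hcau
  simp only [ContinuousMultilinearMap.mkPiRing_apply, Finset.prod_const_one, one_smul] at hcau
  rw [← Nat.cast_smul_eq_nsmul ℂ, norm_smul, Complex.norm_natCast] at hcau
  have hk : (0:ℝ) < k.factorial := by exact_mod_cast k.factorial_pos
  have h3 : ‖a ^ k‖ ≤ 2 * ρ / c * ρ ^ k := by
    rw [inv_pow, div_inv_eq_mul, mul_assoc] at hcau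
    exact le_of_mul_le_mul_left hcau hk
  refine h3.trans ?_
  gcongr
  linarith

/-- complexification -/
theorem l2norm_eq {N : ℕ} (z : Fin N → ℝ) : l2norm z = √((N:ℝ)⁻¹) * ‖WithLp.toLp 2 (fun i => (z i : ℂ))‖ := by
  rw [l2norm, Real.sqrt_mul (by positivity), EuclideanSpace.norm_eq]
  simp

theorem qn_eq {N : ℕ} (z : Fin N → ℂ) : qn z = (N:ℝ)⁻¹ * ‖WithLp.toLp 2 z‖ ^ 2 := by
  rw [qn, EuclideanSpace.norm_sq_eq]

theorem AmatE_eq (h : Crv L l) {N : ℕ} (a b : Fin N → ℝ) (i j : Fin N) :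
    AmatE l a b i j = Ks l (b j) (a i) := by
  unfold AmatE
  simp only [Matrix.of_apply]
  split_ifs with hc
  · rw [Ks_diag h hc]
  · rw [Ks_of_ne h hc, Complex.div_im]
    simp only [dotR, normalv, ← Complex.normSq_eq_norm_sq]
    simp
    ring

/-- the complexified matrix -/
noncomputable def Mc (L : ℝ) (l : ℝ → ℂ) {N : ℕ} (a b : Fin N → ℝ) : Matrix (Fin N) (Fin N) ℂ :=
  ((L / (N : ℝ)) • AmatE l a b - π • (1 : Matrix (Fin N) (Fin N) ℝ)).map Complex.ofReal

theorem Mc_pow {N : ℕ} (a b : Fin N → ℝ) (k : ℕ) (z : Fin N → ℝ) :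
    (Mc L l a b ^ k).mulVec (fun i => (z i : ℂ)) = fun i => (((((L / (N : ℝ)) • AmatE l a b
            - π • (1 : Matrix (Fin N) (Fin N) ℝ)) ^ k).mulVec z i : ℝ) : ℂ) := by
  have : Mc L l a b ^ k = (((L / (N : ℝ)) • AmatE l a b - π • (1 : Matrix (Fin N) (Fin N) ℝ)) ^ k).map Complex.ofReal := by
    exact (map_pow (Complex.ofRealHom.mapMatrix) _ k).symm
  rw [this]
  funext i
  simp [Matrix.mulVec, dotProduct]

theorem Mc_res (h : Crv L l) {N : ℕ} (a b : Fin N → ℝ) (μ : ℂ) (z : Fin N → ℂ) :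
    (Mc L l a b).mulVec z - μ • z = res L l a b (μ + π) z := by
  funext i
  have e : ∀ j, Mc L l a b i j * z j = ((L / (N:ℝ) : ℝ) : ℂ) * ((Ks l (b j) (a i) : ℂ) * z j) -
      (if i = j then (π:ℂ) * z j else 0) := by
    intro j
    simp only [Mc, Matrix.map_apply, Matrix.sub_apply, Matrix.smul_apply, AmatE_eq h, Matrix.one_apply, smul_eq_mul]
    split_ifs <;> push_cast <;> ring
  simp only [Pi.sub_apply, Pi.smul_apply, smul_eq_mul, Matrix.mulVec, dotProduct, res, e]
  rw [Finset.sum_sub_distrib, ← Finset.mul_sum, Finset.sum_ite_eq]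
  simp; ring

end FC


theorem fluid_charge_invertibility
    (L : ℝ) (hL : 0 < L) (l : ℝ → ℂ)
    (hsm : ContDiff ℝ (⊤ : ℕ∞) l) (hper : ∀ s, l (s + L) = l s)
    (harc : ∀ s, ‖deriv l s‖ = 1) (hinj : Set.InjOn l (Set.Ico 0 L))
    (horient : ∃ z₀ : ℂ, (∀ s, l s ≠ z₀) ∧
      (∫ t in (0:ℝ)..L, deriv l t / (l t - z₀)) = 2 * (π : ℂ) * Complex.I)
    (κ : ℕ) (hκ : 2 ≤ κ) (M : ℝ) (hM : 0 < M)
    (ms mst : (N : ℕ) → Fin N → ℝ)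
    (hms : ∀ N, 2 ≤ N → ∀ i : Fin N,
      |ms N i - ((i : ℕ) : ℝ) * L / (N : ℝ)| ≤ M / (N : ℝ) ^ κ)
    (hmst : ∀ N, 2 ≤ N → ∀ i : Fin N,
      |mst N i - ((i : ℕ) : ℝ) * L / (N : ℝ)| ≤ M / (N : ℝ) ^ κ) :
    (∃ δ > 0, ∃ Nstar kstar : ℕ, 1 ≤ Nstar ∧ 1 ≤ kstar ∧
      ∀ N : ℕ, Nstar ≤ N → ∀ k : ℕ, kstar ≤ k → ∀ z : Fin N → ℝ,
        l2norm ((((L / (N : ℝ)) • AmatE l (mst N) (ms N)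
            - π • (1 : Matrix (Fin N) (Fin N) ℝ)) ^ k).mulVec z)
          ≤ (2 * π - δ) ^ k * l2norm z) ∧
    (∃ C > 0, ∃ N₀ : ℕ, ∀ N : ℕ, N₀ ≤ N → ∀ v : Fin N → ℝ,
      (∃! z : Fin N → ℝ,
        (L / (N : ℝ)) • (AmatE l (mst N) (ms N)).mulVec z + π • z = v) ∧
      ∀ z : Fin N → ℝ,
        (L / (N : ℝ)) • (AmatE l (mst N) (ms N)).mulVec z + π • z = v →
        l2norm z ≤ C * l2norm v) := by
  have h : FC.Crv L l := ⟨hL, hsm, hper, harc, hinj⟩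
  obtain ⟨z₀, hz, hw⟩ := horient
  have ho : FC.Ori L l := FC.ori_of h hz hw
  have hp := Real.pi_gt_three
  have mesh : ∀ (m : (N : ℕ) → Fin N → ℝ), (∀ N, 2 ≤ N → ∀ i : Fin N,
      |m N i - ((i : ℕ) : ℝ) * L / (N : ℝ)| ≤ M / (N : ℝ) ^ κ) →
      ∀ ε > 0, ∃ N0, ∀ N ≥ N0, ∀ i : Fin N, |m N i - ((i : ℕ) : ℝ) * L / (N : ℝ)| < ε := by
    intro m hm ε hε
    obtain ⟨n, hn⟩ := exists_nat_gt (M / ε)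
    refine ⟨n + 2, fun N hN i => (hm N (by omega) i).trans_lt ?_⟩
    have h1 : (n:ℝ) ≤ N := by exact_mod_cast (by omega : n ≤ N)
    have h2 : (1:ℝ) ≤ N := by exact_mod_cast (by omega : 1 ≤ N)
    have h3 : (N:ℝ) ≤ (N:ℝ) ^ κ := le_self_pow₀ h2 (by omega)
    rw [div_lt_iff₀ hε] at hn
    rw [div_lt_iff₀ (by positivity)]
    nlinarith
  obtain ⟨c0, hc0, N1, hlow⟩ := FC.lower h ho ms mst (mesh ms hms) (mesh mst hmst)
  obtain ⟨c, hc, hc1, hcc⟩ : ∃ c : ℝ, 0 < c ∧ c ≤ 1 ∧ c ^ 2 ≤ c0 := by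
    refine ⟨min (√c0) 1, by positivity, min_le_right _ _, ?_⟩
    calc (min (√c0) 1) ^ 2 ≤ (√c0) ^ 2 := by gcongr; exact min_le_left _ _
      _ = c0 := Real.sq_sqrt hc0.le
  have H : ∀ N, N1 + 1 ≤ N → ∀ μ : ℂ, 2 * π ≤ ‖μ‖ → ∀ z : Fin N → ℂ,
      c * ‖WithLp.toLp 2 z‖ ≤ ‖WithLp.toLp 2 ((FC.Mc L l (mst N) (ms N)).mulVec z - μ • z)‖ := by
    intro N hN μ hμ z
    have hN0 : (0:ℝ) < N := by exact_mod_cast (by omega : 0 < N)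
    have h1 := hlow N (by omega) (μ + π) (by simpa using hμ) z
    rw [FC.Mc_res h]
    rw [FC.qn_eq, FC.qn_eq] at h1
    have h2 : c0 * ‖WithLp.toLp 2 z‖ ^ 2 ≤ ‖WithLp.toLp 2 (FC.res L l (mst N) (ms N) (μ + π) z)‖ ^ 2 := by
      rw [mul_left_comm] at h1
      exact le_of_mul_le_mul_left h1 (by positivity)
    apply le_of_sq_le_sq _ (norm_nonneg _)
    rw [mul_pow]
    exact (mul_le_mul_of_nonneg_right hcc (by positivity)).trans h2
  refine ⟨⟨c / 4, by positivity, N1 + 1, ?_⟩, ⟨1 / c, by positivity, N1 + 1, ?_⟩⟩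
  · have hr0 : 0 < 2 * π - c / 2 := by linarith
    have hr1 : 0 < 2 * π - c / 4 := by linarith
    have hq : (2 * π - c / 2) / (2 * π - c / 4) < 1 := by rw [div_lt_one hr1]; linarith
    have hC0 : 0 < 2 * (2 * π) / c := by positivity
    obtain ⟨k0, hk0⟩ := exists_pow_lt_of_lt_one (inv_pos.2 hC0) hq
    refine ⟨k0 + 1, by omega, by omega, fun N hN k hk z => ?_⟩
    have hkb : (2 * (2 * π) / c) * (2 * π - c / 2) ^ k ≤ (2 * π - c / 4) ^ k := by
      have h1 : ((2 * π - c / 2) / (2 * π - c / 4)) ^ k ≤ (2 * (2 * π) / c)⁻¹ :=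
        (pow_le_pow_of_le_one (by positivity) hq.le (by omega : k0 ≤ k)).trans hk0.le
      rw [div_pow, div_le_iff₀ (by positivity)] at h1
      rw [← le_inv_mul_iff₀ hC0]
      exact h1
    set a := Matrix.toEuclideanCLM (𝕜 := ℂ) (n := Fin N) (FC.Mc L l (mst N) (ms N)) with ha
    have hpow := FC.pow_bound a hc hc1 (fun μ hμ z => by
      have := H N hN μ hμ (WithLp.ofLp z)
      exact this) k
    rw [FC.l2norm_eq, FC.l2norm_eq, ← FC.Mc_pow, ← Matrix.toEuclideanCLM_toLp, map_pow, ← ha]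
    calc _ ≤ √((N:ℝ)⁻¹) * ((2 * π - c / 4) ^ k * ‖WithLp.toLp 2 (fun i => (z i : ℂ))‖) := by
          gcongr
          refine (a ^ k).le_of_opNorm_le (hpow.trans hkb) _
      _ = _ := by ring
  · intro N hN
    have hN0 : (0:ℝ) < N := by exact_mod_cast (by omega : 0 < N)
    have hb : ∀ z : Fin N → ℝ, l2norm z ≤ 1 / c *
        l2norm ((L / (N : ℝ)) • (AmatE l (mst N) (ms N)).mulVec z + π • z) := by
      intro z
      have h1 := H N hN (-(2 * π : ℝ) : ℂ) (by
        rw [norm_neg, Complex.norm_real, Real.norm_of_nonneg (by positivity)]) (fun i => (z i : ℂ))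
      have h2 := FC.Mc_pow (L := L) (l := l) (mst N) (ms N) 1 z
      rw [pow_one, pow_one] at h2
      rw [h2] at h1
      have h3 : (fun i => (((((L / (N : ℝ)) • AmatE l (mst N) (ms N)
            - π • (1 : Matrix (Fin N) (Fin N) ℝ))).mulVec z i : ℝ) : ℂ)) - (-(2 * π : ℝ) : ℂ) • (fun i => (z i : ℂ)) =
          fun i => ((((L / (N : ℝ)) • (AmatE l (mst N) (ms N)).mulVec z + π • z) i : ℝ) : ℂ) := by
        funext i
        simp [Matrix.sub_mulVec, Matrix.smul_mulVec]
        ring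
      rw [h3] at h1
      rw [FC.l2norm_eq, FC.l2norm_eq, one_div, le_inv_mul_iff₀ hc, mul_left_comm]
      gcongr
    let T : (Fin N → ℝ) →ₗ[ℝ] (Fin N → ℝ) :=
      (L / (N : ℝ)) • (AmatE l (mst N) (ms N)).mulVecLin + π • LinearMap.id
    have hT : ∀ z, T z = (L / (N : ℝ)) • (AmatE l (mst N) (ms N)).mulVec z + π • z := fun z => rfl
    have hTinj : Function.Injective T := by
      rw [injective_iff_map_eq_zero]
      intro z hz
      have h1 := hb z
      rw [← hT, hz] at h1
      have h2 : l2norm (0 : Fin N → ℝ) = 0 := by simp [l2norm]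
      rw [h2, mul_zero, FC.l2norm_eq] at h1
      have h3 : 0 < √((N:ℝ)⁻¹) := by positivity
      have h4 : ‖WithLp.toLp 2 (fun i => (z i : ℂ))‖ = 0 := by
        apply le_antisymm _ (norm_nonneg _)
        by_contra hcon
        push Not at hcon
        have := mul_pos h3 hcon
        linarith
      have h5 := norm_eq_zero.1 h4
      funext i
      have := congrFun (congrArg WithLp.ofLp h5) i
      simpa using this
    have hTs : Function.Surjective T := LinearMap.injective_iff_surjective.1 hTinj
    intro v
    refine ⟨?_, ?_⟩
    · obtain ⟨z, hz⟩ := hTs v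
      refine ⟨z, hz, fun y hy => hTinj ?_⟩
      rw [hz]; exact hy
    · intro z hz
      rw [← hz]; exact hb z
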